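/- arXiv:0809.3031 — 4 statements merged into one kernel-verified Lean document; each statement's English description precedes it below -/
import Mathlib

section
/- Let H be a semisimple Hopf algebra over ℂ of dimension 60, and let V be a simple left H-module. Then the dimension of V over ℂ divides 60. -/
theorem num_contra (n : ℕ) (d : Fin n → ℕ) (k : Fin n) (hk : d k = 7)
    (hs : ∑ i, d i * d i = 60) (t : Fin n → Fin n → ℕ)
    (h1 : ∀ i, d i * 7 = ∑ j, d j * t i j)
    (h2 : ∀ i j, t i j ≠ 0 → 7 ≤ d i * d j)
    (h3 : ∑ i, d i * t i k = 49) : False := by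
  have hs' : ∑ i ∈ Finset.univ.erase k, d i * d i = 11 := by
    have := Finset.add_sum_erase Finset.univ (fun i => d i * d i) (Finset.mem_univ k)
    simp only [hk, hs] at this
    omega
  have hle : ∀ i, i ≠ k → d i ≤ 3 := by
    intro i hi
    have : d i * d i ≤ 11 := hs' ▸ Finset.single_le_sum (f := fun i => d i * d i)
      (fun _ _ => Nat.zero_le _) (Finset.mem_erase.2 ⟨hi, Finset.mem_univ i⟩)
    nlinarith
  have ht : ∀ i, i ≠ k → t i k = d i ∨ (d i = 3 ∧ t i k = 0) := by
    intro i hi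
    have e := h1 i
    rw [← Finset.add_sum_erase Finset.univ (fun j => d j * t i j) (Finset.mem_univ k), hk] at e
    have hi3 := hle i hi
    by_cases h : d i = 3
    · have hdvd : 3 ∣ ∑ j ∈ Finset.univ.erase k, d j * t i j := by
        apply Finset.dvd_sum
        intro j hj
        have hj3 := hle j (Finset.mem_erase.1 hj).1
        by_cases hz : t i j = 0
        · simp [hz]
        · have := h2 i j hz
          rw [h] at this
          have : d j = 3 := by omega
          simp [this]
      obtain ⟨s, hs⟩ := hdvd
      rw [hs] at e
      omega
    · left
      have : ∑ j ∈ Finset.univ.erase k, d j * t i j = 0 := by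
        apply Finset.sum_eq_zero
        intro j hj
        have hj3 := hle j (Finset.mem_erase.1 hj).1
        by_cases hz : t i j = 0
        · simp [hz]
        · have := h2 i j hz
          have : d i ≤ 2 := by omega
          nlinarith
      omega
  have h3' : 7 * t k k + ∑ i ∈ Finset.univ.erase k, d i * t i k = 49 := by
    rw [← h3, ← Finset.add_sum_erase Finset.univ (fun i => d i * t i k) (Finset.mem_univ k), hk]
  by_cases hex : ∃ i0, i0 ≠ k ∧ d i0 = 3
  · obtain ⟨i0, hi0, hd0⟩ := hex
    have hm : i0 ∈ Finset.univ.erase k := Finset.mem_erase.2 ⟨hi0, Finset.mem_univ _⟩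
    rw [← Finset.add_sum_erase _ _ hm, hd0] at hs'
    rw [← Finset.add_sum_erase _ (fun i => d i * t i k) hm, hd0] at h3'
    have : ∑ i ∈ (Finset.univ.erase k).erase i0, d i * t i k
        = ∑ i ∈ (Finset.univ.erase k).erase i0, d i * d i := by
      apply Finset.sum_congr rfl
      intro i hi
      have hik : i ≠ k := (Finset.mem_erase.1 (Finset.mem_erase.1 hi).2).1
      rcases ht i hik with h | ⟨h, _⟩
      · rw [h]
      · exfalso
        have := Finset.single_le_sum (f := fun i => d i * d i)
          (fun _ _ => Nat.zero_le _) hi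
        simp only [h] at this
        omega
    rw [this] at h3'
    rcases ht i0 hi0 with h | ⟨_, h⟩ <;> omega
  · have : ∑ i ∈ Finset.univ.erase k, d i * t i k = 11 := by
      rw [← hs']
      apply Finset.sum_congr rfl
      intro i hi
      have hik : i ≠ k := (Finset.mem_erase.1 hi).1
      rcases ht i hik with h | ⟨h, _⟩
      · rw [h]
      · exact absurd ⟨i, hik, h⟩ hex
    omega

open scoped TensorProduct
open Coalgebra HopfAlgebra

section Sweedler
variable {H : Type*} [Ring H] [HopfAlgebra ℂ H]

theorem sweedler_left (h : H) {ι : Type*} (r : Coalgebra.Repr ℂ h ι) :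
    ∑ i ∈ r.index, (antipode ℂ (r.left i) ⊗ₜ[ℂ] (1 : H)) * comul (R := ℂ) (r.right i)
      = (1 : H) ⊗ₜ[ℂ] h := by
  have key := congrArg (((LinearMap.mul' ℂ H) ∘ₗ (antipode ℂ).rTensor H).rTensor H)
    (coassoc_symm_apply (R := ℂ) h)
  rw [← LinearMap.rTensor_comp_apply, LinearMap.comp_assoc,
    HopfAlgebra.mul_antipode_rTensor_comul, LinearMap.rTensor_comp_apply _ (Algebra.linearMap ℂ H),
    rTensor_counit_comul] at key
  simp only [LinearMap.rTensor_tmul, Algebra.linearMap_apply, map_one] at key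
  rw [← key, ← r.eq]
  simp only [map_sum]
  refine Finset.sum_congr rfl fun i _ => ?_
  simp only [LinearMap.lTensor_tmul]
  generalize comul (R := ℂ) (r.right i) = Y
  induction Y with
  | zero => simp
  | add a b ha hb => simp only [mul_add, TensorProduct.tmul_add, map_add, ha, hb]
  | tmul a b => simp

theorem sweedler_right (h : H) {ι : Type*} (r : Coalgebra.Repr ℂ h ι) :
    ∑ i ∈ r.index, comul (R := ℂ) (r.left i) * ((1 : H) ⊗ₜ[ℂ] antipode ℂ (r.right i))
      = h ⊗ₜ[ℂ] (1 : H) := by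
  have key := congrArg (((LinearMap.mul' ℂ H) ∘ₗ (antipode ℂ).lTensor H).lTensor H)
    (coassoc_apply (R := ℂ) h)
  rw [← LinearMap.lTensor_comp_apply, LinearMap.comp_assoc,
    HopfAlgebra.mul_antipode_lTensor_comul, LinearMap.lTensor_comp_apply _ (Algebra.linearMap ℂ H),
    lTensor_counit_comul] at key
  simp only [LinearMap.lTensor_tmul, Algebra.linearMap_apply, map_one] at key
  rw [← key, ← r.eq]
  simp only [map_sum]
  refine Finset.sum_congr rfl fun i _ => ?_
  simp only [LinearMap.rTensor_tmul]
  generalize comul (R := ℂ) (r.left i) = Y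
  induction Y with
  | zero => simp
  | add a b ha hb => simp only [add_mul, TensorProduct.add_tmul, map_add, ha, hb]
  | tmul a b => simp

variable {A B : Type*} [AddCommGroup A] [Module ℂ A] [AddCommGroup B] [Module ℂ B]

/-- The action of `H ⊗ H` on `A ⊗ B`. -/
noncomputable def tens (ρ : H →ₐ[ℂ] Module.End ℂ A) (σ : H →ₐ[ℂ] Module.End ℂ B) :
    H ⊗[ℂ] H →ₐ[ℂ] Module.End ℂ (A ⊗[ℂ] B) :=
  (Module.endTensorEndAlgHom (R := ℂ) (S := ℂ) (A := ℂ) (M := A) (N := B)).comp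
    (Algebra.TensorProduct.map ρ σ)

theorem tens_tmul (ρ : H →ₐ[ℂ] Module.End ℂ A) (σ : H →ₐ[ℂ] Module.End ℂ B) (x y : H) :
    tens ρ σ (x ⊗ₜ y) = TensorProduct.map (ρ x) (σ y) := by
  simp only [tens, AlgHom.comp_apply, Algebra.TensorProduct.map_tmul]
  rfl

/-- The tensor product representation. -/
noncomputable def tensRep (ρ : H →ₐ[ℂ] Module.End ℂ A) (σ : H →ₐ[ℂ] Module.End ℂ B) :
    H →ₐ[ℂ] Module.End ℂ (A ⊗[ℂ] B) :=
  (tens ρ σ).comp (Bialgebra.comulAlgHom ℂ H)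

theorem tensRep_apply (ρ : H →ₐ[ℂ] Module.End ℂ A) (σ : H →ₐ[ℂ] Module.End ℂ B) (x : H) :
    tensRep ρ σ x = tens ρ σ (comul (R := ℂ) x) := rfl

/-- Contraction with a functional on the first factor. -/
noncomputable def contr : Module.Dual ℂ A →ₗ[ℂ] A ⊗[ℂ] B →ₗ[ℂ] B :=
  LinearMap.mk₂ ℂ (fun f z => TensorProduct.lid ℂ B (f.rTensor B z))
    (by intros; simp [LinearMap.rTensor_add]) (by intros; simp [LinearMap.rTensor_smul])
    (by intros; simp) (by intros; simp)

theorem contr_tmul (f : Module.Dual ℂ A) (a : A) (b : B) :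
    contr f (a ⊗ₜ[ℂ] b) = f a • b := by
  simp [contr]

theorem contr_inv (ρ : H →ₐ[ℂ] Module.End ℂ A) (σ : H →ₐ[ℂ] Module.End ℂ B)
    (h : H) {ι : Type*} (r : Coalgebra.Repr ℂ h ι) (f : Module.Dual ℂ A) (z : A ⊗[ℂ] B) :
    σ h (contr f z) = ∑ i ∈ r.index,
      contr (f ∘ₗ ρ (antipode ℂ (r.left i))) (tensRep ρ σ (r.right i) z) := by
  have e1 : ∀ (s : H) (y : A ⊗[ℂ] B), contr (f ∘ₗ ρ s) y = contr f (tens ρ σ (s ⊗ₜ 1) y) := by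
    intro s y
    induction y with
    | zero => simp
    | add a b ha hb => simp only [map_add, ha, hb]
    | tmul a b => simp [tens_tmul, contr_tmul]
  have e2 : σ h (contr f z) = contr f (tens ρ σ (1 ⊗ₜ h) z) := by
    induction z with
    | zero => simp
    | add a b ha hb => simp only [map_add, ha, hb]
    | tmul a b => simp [tens_tmul, contr_tmul]
  rw [e2, ← sweedler_left h r]
  simp only [e1, map_sum, map_mul, LinearMap.sum_apply, Module.End.mul_apply, tensRep_apply]

theorem exists_contr_ne [FiniteDimensional ℂ A] (z : A ⊗[ℂ] B) (hz : z ≠ 0) :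
    ∃ f : Module.Dual ℂ A, contr f z ≠ 0 := by
  by_contra! hc
  apply hz
  let b := Module.finBasis ℂ A
  have : ∀ z : A ⊗[ℂ] B, z = ∑ i, b i ⊗ₜ[ℂ] contr (b.coord i) z := by
    intro z
    induction z with
    | zero => simp
    | add x y hx hy =>
      simp only [map_add, TensorProduct.tmul_add, Finset.sum_add_distrib, ← hx, ← hy]
    | tmul x y =>
      simp only [contr_tmul, TensorProduct.tmul_smul, TensorProduct.smul_tmul',
        ← TensorProduct.sum_tmul]
      simp
  rw [this z]
  simp [hc]

theorem dim_le [FiniteDimensional ℂ A] [FiniteDimensional ℂ B]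
    (ρ : H →ₐ[ℂ] Module.End ℂ A) (σ : H →ₐ[ℂ] Module.End ℂ B)
    (hσ : ∀ K : Submodule ℂ B, (∀ h, ∀ x ∈ K, σ h x ∈ K) → K ≠ ⊥ → K = ⊤)
    (L : Submodule ℂ (A ⊗[ℂ] B)) (hL : ∀ h, ∀ x ∈ L, tensRep ρ σ h x ∈ L) (hL0 : L ≠ ⊥) :
    Module.finrank ℂ B ≤ Module.finrank ℂ A * Module.finrank ℂ L := by
  let Φ : Module.Dual ℂ A ⊗[ℂ] L →ₗ[ℂ] B := TensorProduct.lift ((contr (A := A) (B := B)).compl₂ L.subtype)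
  have hΦ : ∀ f (x : L), Φ (f ⊗ₜ x) = contr f (x : A ⊗[ℂ] B) := by intro f x; simp [Φ]
  have htop : LinearMap.range Φ = ⊤ := by
    apply hσ
    · rintro h _ ⟨w, rfl⟩
      induction w with
      | zero => simp
      | add a b ha hb => simpa only [map_add] using add_mem ha hb
      | tmul f x =>
        rw [hΦ, contr_inv ρ σ h (Coalgebra.Repr.arbitrary ℂ h)]
        refine sum_mem fun i _ => ?_
        exact ⟨_ ⊗ₜ ⟨_, hL _ _ x.2⟩, hΦ _ _⟩
    · obtain ⟨z, hz, hz0⟩ := L.ne_bot_iff.1 hL0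
      obtain ⟨f, hf⟩ := exists_contr_ne z hz0
      exact (Submodule.ne_bot_iff _).2 ⟨_, ⟨f ⊗ₜ ⟨z, hz⟩, hΦ _ _⟩, hf⟩
  have := LinearMap.finrank_le_finrank_of_surjective (LinearMap.range_eq_top.1 htop)
  simpa [Module.finrank_tensorProduct, Subspace.dual_finrank_eq] using this

theorem trace_tens [FiniteDimensional ℂ A] [FiniteDimensional ℂ B]
    (ρ : H →ₐ[ℂ] Module.End ℂ A) (σ : H →ₐ[ℂ] Module.End ℂ B) (x y : H) :
    LinearMap.trace ℂ _ (tens ρ σ (x ⊗ₜ y)) = LinearMap.trace ℂ _ (ρ x) * LinearMap.trace ℂ _ (σ y) := by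
  rw [tens_tmul, LinearMap.trace_tensorProduct']

theorem trace_reg_tens [FiniteDimensional ℂ H] [FiniteDimensional ℂ B]
    (σ : H →ₐ[ℂ] Module.End ℂ B) (h : H) :
    LinearMap.trace ℂ _ (tensRep (Algebra.lmul ℂ H) σ h)
      = LinearMap.trace ℂ _ (Algebra.lmul ℂ H h) * Module.finrank ℂ B := by
  let T := tens (Algebra.lmul ℂ H) σ
  let θ : H ⊗[ℂ] B →ₗ[ℂ] H ⊗[ℂ] B := TensorProduct.lift
    (LinearMap.mk₂ ℂ (fun k v => T (comul (R := ℂ) k) ((1 : H) ⊗ₜ[ℂ] v))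
      (by intros; simp) (by intros; simp) (by intros; simp [TensorProduct.tmul_add])
      (by intros; simp))
  have hθ : ∀ k v, θ (k ⊗ₜ v) = T (comul (R := ℂ) k) ((1 : H) ⊗ₜ[ℂ] v) := by
    intro k v; simp [θ]
  have hsurj : Function.Surjective θ := by
    rw [← LinearMap.range_eq_top, eq_top_iff]
    rintro z -
    induction z with
    | zero => simp
    | add a b ha hb => exact add_mem (ha) (hb)
    | tmul k v =>
      have r := Coalgebra.Repr.arbitrary ℂ k
      refine ⟨∑ i ∈ r.index, r.left i ⊗ₜ σ (antipode ℂ (r.right i)) v, ?_⟩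
      have : k ⊗ₜ[ℂ] v = T (k ⊗ₜ 1) ((1 : H) ⊗ₜ v) := by simp [T, tens_tmul]
      rw [this, ← sweedler_right k r]
      simp only [map_sum, map_mul, LinearMap.sum_apply, Module.End.mul_apply, hθ]
      simp [T, tens_tmul]
  have hbij : Function.Bijective θ := ⟨LinearMap.injective_iff_surjective.2 hsurj, hsurj⟩
  let e := LinearEquiv.ofBijective θ hbij
  have hconj : e.conj (TensorProduct.map (Algebra.lmul ℂ H h) LinearMap.id)
      = tensRep (Algebra.lmul ℂ H) σ h := by
    apply LinearMap.ext
    intro z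
    obtain ⟨w, rfl⟩ := e.surjective z
    simp only [LinearEquiv.conj_apply_apply, LinearEquiv.symm_apply_apply]
    change θ _ = tensRep (Algebra.lmul ℂ H) σ h (θ w)
    induction w with
    | zero => simp
    | add a b ha hb => simp only [map_add, ha, hb]
    | tmul k v =>
      have hl : Algebra.lmul ℂ H h k = h * k := rfl
      simp only [TensorProduct.map_tmul, hθ, tensRep_apply, hl, LinearMap.id_apply]
      simp [T]
  rw [← hconj, LinearMap.trace_conj', LinearMap.trace_tensorProduct', LinearMap.trace_id]

end Sweedler

section Units
variable {H : Type*} [Ring H] [Algebra ℂ H] {n : ℕ} {d : Fin n → ℕ}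
  (e : H ≃ₐ[ℂ] Π i, Matrix (Fin (d i)) (Fin (d i)) ℂ)

/-- Matrix units. -/
noncomputable def mU (i : Fin n) (a b : Fin (d i)) : H :=
  e.symm (Pi.single i (Matrix.single a b 1))

theorem mU_mul (i : Fin n) (a b c : Fin (d i)) : mU e i a b * mU e i b c = mU e i a c := by
  rw [mU, mU, ← map_mul, ← Pi.single_mul]; simp [mU]

theorem mul_mU (h : H) (i : Fin n) (a b : Fin (d i)) :
    h * mU e i a b = ∑ c, e h i c a • mU e i c b := by
  apply e.injective
  simp only [mU, map_mul, map_sum, map_smul, AlgEquiv.apply_symm_apply]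
  funext j
  by_cases hj : j = i
  · subst hj
    simp only [Pi.mul_apply, Pi.single_eq_same, Finset.sum_apply, Pi.smul_apply]
    ext p q
    simp [Matrix.mul_apply, Matrix.single_apply, Matrix.sum_apply]
    by_cases hq : b = q <;> simp [hq]
  · simp [Finset.sum_apply, hj]

theorem sum_mU : ∑ i, ∑ a, mU e i a a = 1 := by
  apply e.injective
  simp only [mU, map_sum, map_one, AlgEquiv.apply_symm_apply]
  funext j
  rw [Finset.sum_apply, Finset.sum_eq_single j]
  · ext p q
    simp [Finset.sum_apply, Matrix.sum_apply, Matrix.single_apply, Matrix.one_apply]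
    by_cases hpq : p = q
    · subst hpq
      simp [Finset.filter_eq']
    · simp [hpq]
  · intro i _ hij
    simp [Finset.sum_apply, Pi.single_eq_of_ne hij.symm]
  · simp

/-- The irreducible representations. -/
noncomputable def irr (i : Fin n) : H →ₐ[ℂ] Module.End ℂ (Fin (d i) → ℂ) :=
  ((Matrix.toLinAlgEquiv' : Matrix (Fin (d i)) (Fin (d i)) ℂ ≃ₐ[ℂ] _).toAlgHom.comp
    (Pi.evalAlgHom ℂ _ i)).comp e.toAlgHom

theorem trace_irr (i : Fin n) (h : H) :
    LinearMap.trace ℂ _ (irr e i h) = (e h i).trace := by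
  have : irr e i h = Matrix.toLin' (e h i) := rfl
  rw [this, Matrix.trace_toLin'_eq]

theorem trace_reg (h : H) :
    LinearMap.trace ℂ _ (Algebra.lmul ℂ H h) = ∑ i, (d i : ℂ) * (e h i).trace := by
  have h1 : LinearMap.trace ℂ _ (Algebra.lmul ℂ H h) = LinearMap.trace ℂ _
      (Algebra.lmul ℂ (Π i, Matrix (Fin (d i)) (Fin (d i)) ℂ) (e h)) := by
    rw [← LinearMap.trace_conj' _ e.toLinearEquiv]
    congr 1
    apply LinearMap.ext
    intro z
    simp [LinearEquiv.conj_apply_apply]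
  rw [h1, LinearMap.trace_eq_matrix_trace ℂ (Pi.basis fun i => Matrix.stdBasis ℂ (Fin (d i)) (Fin (d i)))]
  rw [Matrix.trace, Fintype.sum_sigma]
  refine Finset.sum_congr rfl fun i _ => ?_
  rw [Fintype.sum_prod_type]
  have hl : ∀ x y : (Π i, Matrix (Fin (d i)) (Fin (d i)) ℂ), Algebra.lmul ℂ _ x y = x * y :=
    fun _ _ => rfl
  simp only [Matrix.diag_apply, LinearMap.toMatrix_apply, Pi.basis_repr, Pi.basis_apply,
    Matrix.stdBasis_eq_single, hl, Pi.mul_apply, Pi.single_eq_same]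
  have : ∀ (M : Matrix (Fin (d i)) (Fin (d i)) ℂ) (a b : Fin (d i)),
      (Matrix.stdBasis ℂ (Fin (d i)) (Fin (d i))).repr M (a, b) = M a b := by
    intro M a b; simp [Matrix.stdBasis]
  simp [this, Matrix.trace, Finset.mul_sum]

variable {M : Type*} [AddCommGroup M] [Module ℂ M] [FiniteDimensional ℂ M]
  (ρ : H →ₐ[ℂ] Module.End ℂ M)

/-- multiplicity -/
noncomputable def mult (i : Fin n) (a : Fin (d i)) : ℕ :=
  Module.finrank ℂ (LinearMap.range (ρ (mU e i a a)))

theorem mult_trace (i : Fin n) (a : Fin (d i)) :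
    LinearMap.trace ℂ _ (ρ (mU e i a a)) = mult e ρ i a := by
  have : LinearMap.IsProj (LinearMap.range (ρ (mU e i a a))) (ρ (mU e i a a)) := by
    constructor
    · intro x; exact ⟨x, rfl⟩
    · rintro _ ⟨y, rfl⟩
      rw [← Module.End.mul_apply, ← map_mul, mU_mul]
  rw [this.trace]; rfl

theorem finrank_eq_sum (o : ∀ i, Fin (d i)) :
    Module.finrank ℂ M = ∑ i, d i * mult e ρ i (o i) := by
  have h1 : LinearMap.trace ℂ _ (ρ 1) = (Module.finrank ℂ M : ℂ) := by
    rw [map_one, LinearMap.trace_one]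
  rw [← sum_mU e] at h1
  simp only [map_sum] at h1
  have h2 : ∀ i a, LinearMap.trace ℂ _ (ρ (mU e i a a)) = (mult e ρ i (o i) : ℂ) := by
    intro i a
    rw [← mult_trace, ← mU_mul e i a (o i) a, map_mul, LinearMap.trace_mul_comm, ← map_mul, mU_mul]
  simp only [h2] at h1
  simp at h1
  exact_mod_cast h1.symm

theorem exists_sub (i : Fin n) (a : Fin (d i)) (hm : mult e ρ i a ≠ 0) :
    ∃ L : Submodule ℂ M, (∀ h, ∀ x ∈ L, ρ h x ∈ L) ∧ L ≠ ⊥ ∧ Module.finrank ℂ L ≤ d i := by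
  have : LinearMap.range (ρ (mU e i a a)) ≠ ⊥ := by
    intro h
    apply hm
    rw [mult, h, finrank_bot]
  obtain ⟨u, ⟨v, hv⟩, hu⟩ := (Submodule.ne_bot_iff _).1 this
  refine ⟨Submodule.span ℂ (Set.range fun c => ρ (mU e i c a) u), ?_, ?_, ?_⟩
  · intro h x hx
    induction hx using Submodule.span_induction with
    | mem x hx =>
      obtain ⟨c, rfl⟩ := hx
      simp only [← Module.End.mul_apply, ← map_mul, mul_mU]
      simp only [map_sum, map_smul, LinearMap.sum_apply, LinearMap.smul_apply]
      exact sum_mem fun b _ => Submodule.smul_mem _ _ (Submodule.subset_span ⟨b, rfl⟩)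
    | zero => simp
    | add x y _ _ hx hy => rw [map_add]; exact add_mem hx hy
    | smul c x _ hx => rw [map_smul]; exact Submodule.smul_mem _ _ hx
  · refine (Submodule.ne_bot_iff _).2 ⟨u, Submodule.subset_span ⟨a, ?_⟩, hu⟩
    simp only
    rw [← hv, ← Module.End.mul_apply, ← map_mul, mU_mul]
  · exact (finrank_range_le_card (R := ℂ) fun c => ρ (mU e i c a) u).trans (by simp)

end Units

theorem no_seven {H : Type*} [Ring H] [HopfAlgebra ℂ H] [FiniteDimensional ℂ H]
    (hdim : Module.finrank ℂ H = 60) {n : ℕ} {d : Fin n → ℕ}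
    (e : H ≃ₐ[ℂ] Π i, Matrix (Fin (d i)) (Fin (d i)) ℂ) (o : ∀ i, Fin (d i))
    {V : Type*} [AddCommGroup V] [Module ℂ V] [FiniteDimensional ℂ V]
    (σ : H →ₐ[ℂ] Module.End ℂ V)
    (hσ : ∀ K : Submodule ℂ V, (∀ h, ∀ x ∈ K, σ h x ∈ K) → K ≠ ⊥ → K = ⊤)
    (hsum : ∑ i, d i * d i = 60)
    (hV : Module.finrank ℂ V = 7) (k : Fin n) (hk : d k = 7) : False := by
  refine num_contra n d k hk hsum (fun i j => mult e (tensRep (irr e i) σ) j (o j)) ?_ ?_ ?_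
  · intro i
    rw [← finrank_eq_sum e (tensRep (irr e i) σ) o, Module.finrank_tensorProduct, hV]
    simp
  · intro i j hij
    obtain ⟨L, hL, hL0, hLd⟩ := exists_sub e _ j (o j) hij
    have := dim_le (irr e i) σ hσ L hL hL0
    rw [hV] at this
    simp only [Module.finrank_fin_fun] at this
    exact this.trans (Nat.mul_le_mul_left _ hLd)
  · have key : ∀ X : H ⊗[ℂ] H, LinearMap.trace ℂ _ (tens (Algebra.lmul ℂ H) σ X)
        = ∑ i, (d i : ℂ) * LinearMap.trace ℂ _ (tens (irr e i) σ X) := by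
      intro X
      induction X with
      | zero => simp
      | add a b ha hb => simp only [map_add, ha, hb, mul_add, Finset.sum_add_distrib]
      | tmul x y =>
        simp only [trace_tens, trace_irr, trace_reg e, Finset.sum_mul, mul_assoc]
    have h1 := trace_reg_tens σ (mU e k (o k) (o k))
    have h2 : ∑ i, (d i : ℂ) * (e (mU e k (o k) (o k)) i).trace = 7 := by
      rw [Finset.sum_eq_single k]
      · simp [mU, hk]
      · intro i _ hik
        simp [mU, hik]
      · simp
    rw [tensRep_apply, key, hV, trace_reg e, h2] at h1
    simp only [← tensRep_apply, mult_trace] at h1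
    norm_num at h1
    exact_mod_cast h1

/-- For a semisimple Hopf algebra over ℂ of dimension 60, the dimension of any
simple module divides 60. -/
theorem kaplansky_sixth_for_dim_sixty
    (H : Type*) [Ring H] [HopfAlgebra ℂ H]
    [FiniteDimensional ℂ H] [IsSemisimpleRing H]
    (hdim : Module.finrank ℂ H = 60)
    (V : Type*) [AddCommGroup V] [Module ℂ V] [Module H V] [IsScalarTower ℂ H V]
    [IsSimpleModule H V] :
    Module.finrank ℂ V ∣ 60 := by
  obtain ⟨n, d, hd, ⟨e⟩⟩ := IsSemisimpleRing.exists_algEquiv_pi_matrix_of_isAlgClosed ℂ H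
  have hfin : FiniteDimensional ℂ V := Module.Finite.trans H V
  have hnt : Nontrivial V := IsSimpleModule.nontrivial H V
  let o : ∀ i, Fin (d i) := fun i => ⟨0, Nat.pos_of_ne_zero (hd i).out⟩
  let σ : H →ₐ[ℂ] Module.End ℂ V := Algebra.lsmul ℂ ℂ V
  have hσ : ∀ K : Submodule ℂ V, (∀ h, ∀ x ∈ K, σ h x ∈ K) → K ≠ ⊥ → K = ⊤ := by
    intro K hK hK0
    let K' : Submodule H V := { K.toAddSubmonoid with smul_mem' := fun h x hx => hK h x hx }
    have hm : ∀ x, x ∈ K' ↔ x ∈ K := fun x => Iff.rfl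
    rcases eq_bot_or_eq_top K' with h | h
    · exfalso
      apply hK0
      ext x
      rw [← hm, h]; simp
    · ext x
      rw [← hm, h]; simp
  have hsum : ∑ i, d i * d i = 60 := by
    rw [← hdim, e.toLinearEquiv.finrank_eq, Module.finrank_pi_fintype]
    simp [Module.finrank_matrix]
  have hpos : 0 < Module.finrank ℂ V := Module.finrank_pos
  have hsV := finrank_eq_sum e σ o
  obtain ⟨k, hk⟩ : ∃ k, mult e σ k (o k) ≠ 0 := by
    by_contra! hc
    simp [hc] at hsV
    omega
  have hge : d k ≤ Module.finrank ℂ V := by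
    rw [hsV]
    refine le_trans ?_ (Finset.single_le_sum (f := fun i => d i * mult e σ i (o i))
      (fun _ _ => Nat.zero_le _) (Finset.mem_univ k))
    exact Nat.le_mul_of_pos_right _ (Nat.pos_of_ne_zero hk)
  have hle : Module.finrank ℂ V ≤ d k := by
    obtain ⟨L, hL, hL0, hLd⟩ := exists_sub e σ k (o k) hk
    rw [hσ L hL hL0, finrank_top] at hLd
    exact hLd
  have heq : Module.finrank ℂ V = d k := le_antisymm hle hge
  have h7 : d k ≤ 7 := by
    have : d k * d k ≤ 60 := hsum ▸ Finset.single_le_sum (f := fun i => d i * d i)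
      (fun _ _ => Nat.zero_le _) (Finset.mem_univ k)
    nlinarith
  have hne : d k ≠ 7 := fun h => no_seven hdim e o σ hσ hsum (heq.trans h) k h
  rw [heq] at hpos ⊢
  generalize d k = m at *
  interval_cases m <;> first | omega | decide
end

section
/- Let H be a semisimple Hopf algebra over ℂ whose dimension n satisfies 1 < n < 60. Then H contains a nontrivial group-like element (an element g ≠ 1 with Δ(g) = g ⊗ g and ε(g) = 1), and H admits a nontrivial one-dimensional representation (a ℂ-algebra homomorphism φ : H → ℂ with φ ≠ ε). -/
namespace SSHopf

structure FD (ι : Type) [Fintype ι] [DecidableEq ι] (d : ι → ℕ) (N : ι → ι → ι → ℕ) (z : ι)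
    (s : ι → ι) : Prop where
  dz : d z = 1
  d1 : ∀ i, d i = 1 → i = z
  dpos : ∀ i, 0 < d i
  ss : ∀ i, s (s i) = i
  ds : ∀ i, d (s i) = d i
  hN : ∀ i j, d i * d j = ∑ k, N i j k * d k
  hF : ∀ i j k, N i j k = N k (s j) i
  hz : ∀ j k, N z j k = if j = k then 1 else 0

theorem list_sum_le {ι : Type} [Fintype ι] [DecidableEq ι] (f : ι → ℕ) (l : List ι)
    (hl : l.Nodup) : (l.map f).sum ≤ ∑ k, f k := by
  rw [← List.sum_toFinset f hl]
  exact Finset.sum_le_sum_of_subset (Finset.subset_univ _)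

theorem list_ext {ι : Type} [Fintype ι] [DecidableEq ι] (f : ι → ℕ) (l : List ι)
    (hl : l.Nodup) (h : (l.map f).sum < ∑ k, f k) :
    ∃ k, k ∉ l ∧ 0 < f k ∧ (l.map f).sum + f k ≤ ∑ k, f k := by
  by_contra! hc
  have : ∑ k, f k = (l.map f).sum := by
    rw [← List.sum_toFinset f hl]
    symm
    apply Finset.sum_subset (Finset.subset_univ _)
    intro k _ hk
    by_contra h0
    have hk' : k ∉ l := by simpa using hk
    have := hc k hk' (Nat.pos_of_ne_zero h0)
    have h2 := list_sum_le f (k :: l) (List.nodup_cons.2 ⟨hk', hl⟩)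
    simp at h2
    omega
  omega

section
variable {ι : Type} [Fintype ι] [DecidableEq ι] {d : ι → ℕ} {N : ι → ι → ι → ℕ} {z : ι}
    {s : ι → ι}

theorem FD.le (F : FD ι d N z s) (i j : ι) (l : List ι) (hl : l.Nodup) :
    (l.map (fun k => N i j k * d k)).sum ≤ d i * d j := by
  rw [F.hN]; exact list_sum_le (fun k => N i j k * d k) l hl

theorem FD.ext (F : FD ι d N z s) (i j : ι) (l : List ι) (hl : l.Nodup)
    (h : (l.map (fun k => N i j k * d k)).sum < d i * d j) :
    ∃ k, k ∉ l ∧ 0 < N i j k ∧ (l.map (fun k => N i j k * d k)).sum + N i j k * d k ≤ d i * d j := by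
  rw [F.hN] at h ⊢
  obtain ⟨k, hk, h0, h1⟩ := list_ext (fun k => N i j k * d k) l hl h
  exact ⟨k, hk, Nat.pos_of_mul_pos_right h0, h1⟩

theorem FD.ge2 (F : FD ι d N z s) (k : ι) (h : k ≠ z) : 2 ≤ d k := by
  have := F.dpos k
  have h3 : d k ≠ 1 := fun h' => h (F.d1 k h')
  omega

theorem FD.Nzz (F : FD ι d N z s) (i : ι) : N i (s i) z = 1 := by
  rw [F.hF, F.ss, F.hz]; simp

theorem FD.Nz0 (F : FD ι d N z s) (i j : ι) (h : d i ≠ d j) : N i j z = 0 := by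
  rw [F.hF, F.hz, if_neg]
  rintro rfl
  exact h (F.ds j)

theorem FD.Nz0' (F : FD ι d N z s) (i j : ι) (h : i ≠ j) : N i (s j) z = 0 := by
  rw [F.hF, F.hz, if_neg]
  rw [F.ss]; exact fun h' => h h'.symm

end
end SSHopf

namespace SSHopf
theorem mul_bd {n d r : ℕ} (h : 0 < n) (h2 : n * d ≤ r) : d ≤ r := le_trans (Nat.le_mul_of_pos_left d h) h2

theorem ne_of_d {ι : Type} {d : ι → ℕ} {i j : ι} (h : d i ≠ d j) : i ≠ j := fun e => h (e ▸ rfl)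

section
variable {ι : Type} [Fintype ι] [DecidableEq ι] {d : ι → ℕ} {N : ι → ι → ι → ℕ} {z : ι}
    {s : ι → ι}

/-- no leftover of dimension one -/
theorem FD.no1 (F : FD ι d N z s) (i j : ι) (l : List ι) (hl : l.Nodup) (hz : z ∈ l)
    (h : (l.map (fun k => N i j k * d k)).sum + 1 = d i * d j) : False := by
  obtain ⟨k, hk, h0, h1⟩ := F.ext i j l hl (by omega)
  have : k ≠ z := fun e => hk (e ▸ hz)
  have := F.ge2 k this
  have := mul_bd (r := 1) (d := d k) h0 (by omega)
  omega

theorem FD.no2 (F : FD ι d N z s) (hhi : ∑ i, d i ^ 2 < 60) (V : ι) : d V ≠ 2 := by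
  intro hV
  have dz := F.dz
  have zV : z ≠ V := ne_of_d (d := d) (by omega)
  have hsV := F.ds V
  -- W
  obtain ⟨W, hWz, hW0, hW1⟩ := F.ext V (s V) [z] (by simp) (by simp [F.Nzz, hV, hsV, dz])
  simp [F.Nzz, hV, hsV, dz] at hWz hW1
  have hW2 := F.ge2 W hWz
  have hW3 : d W ≤ 3 := mul_bd (r := 3) hW0 (by omega)
  have hdW : d W = 3 ∧ N V (s V) W = 1 := by
    rcases (by omega : d W = 2 ∨ d W = 3) with h | h
    · exfalso
      rw [h] at hW1
      refine F.no1 V (s V) [z, W] (by simp [Ne.symm hWz]) (by simp) ?_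
      have : N V (s V) W = 1 := by omega
      simp [F.Nzz, hV, hsV, dz, h, this]
    · rw [h] at hW1; exact ⟨h, by omega⟩
  obtain ⟨hdW, hNW⟩ := hdW
  have VW : V ≠ W := ne_of_d (d := d) (by omega)
  have hVunique : ∀ K, N V (s V) K ≠ 0 → K = z ∨ K = W := by
    intro K hK
    by_contra! hc
    have := F.le V (s V) [z, W, K] (by simp [Ne.symm hWz, Ne.symm hc.1, Ne.symm hc.2])
    have h2 := F.dpos K
    simp [F.Nzz, hV, hsV, dz, hdW, hNW] at this
    have h3 : d K ≤ 0 := mul_bd (r := 0) (Nat.pos_of_ne_zero hK) (by omega)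
    omega
  -- W V = V + U
  have hWVV : N W V V = 1 := by rw [F.hF]; exact hNW
  have hWVz : N W V z = 0 := F.Nz0 _ _ (by omega)
  obtain ⟨U, hUm, hU0, hU1⟩ := F.ext W V [z, V] (by simp [zV])
    (by simp [hWVV, hWVz, hV, hdW])
  simp [hWVV, hWVz, hV, hdW] at hUm hU1
  have hU2 := F.ge2 U hUm.1
  have hU3 : d U ≤ 4 := mul_bd (r := 4) hU0 (by omega)
  have hdU : d U = 4 ∧ N W V U = 1 := by
    rcases (by omega : d U = 2 ∨ d U = 3 ∨ d U = 4) with h | h | h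
    · exfalso
      have h5 : N U (s V) W ≠ 0 := by rw [F.hF, F.ss]; omega
      have h6 : N U (s V) z = 0 := F.Nz0' _ _ hUm.2
      refine F.no1 U (s V) [z, W] (by simp [Ne.symm hWz]) (by simp) ?_
      have := F.le U (s V) [z, W] (by simp [Ne.symm hWz])
      simp [h6, hsV, hV, h, hdW] at this ⊢
      omega
    · exfalso
      rw [h] at hU1
      refine F.no1 W V [z, V, U] (by simp [zV, Ne.symm hUm.1, Ne.symm hUm.2]) (by simp) ?_
      have : N W V U = 1 := by omega
      simp [hWVV, hWVz, hV, hdW, h, this]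
    · rw [h] at hU1; exact ⟨h, by omega⟩
  obtain ⟨hdU, hNU⟩ := hdU
  have zU := Ne.symm hUm.1
  have zW := Ne.symm hWz
  -- U V* = W + 5
  have hUW : N U (s V) W = 1 := by rw [F.hF, F.ss]; exact hNU
  have hUz : N U (s V) z = 0 := F.Nz0' _ _ hUm.2
  -- no T of dim 3 other than W in U V*
  have noT : ∀ T, d T = 3 → T ≠ W → N U (s V) T = 0 := by
    intro T hT hTW
    by_contra h0
    have h1 : N T V U ≠ 0 := by rw [F.hF]; exact h0
    have h2 : N T V z = 0 := F.Nz0 _ _ (by omega)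
    have h3 := F.le T V [z, U] (by simp [zU])
    simp [h2, hT, hV, hdU] at h3
    have h4 : N T V U = 1 := by omega
    obtain ⟨Q, hQm, hQ0, hQ1⟩ := F.ext T V [z, U] (by simp [zU]) (by simp [h2, h4, hT, hV, hdU])
    simp [h2, h4, hT, hV, hdU] at hQm hQ1
    have hQ2 := F.ge2 Q hQm.1
    have hQ3 : d Q ≤ 2 := mul_bd (r := 2) hQ0 (by omega)
    have hdQ : d Q = 2 := by omega
    have h5 : N Q (s V) T ≠ 0 := by rw [F.hF, F.ss]; omega
    have zT : z ≠ T := ne_of_d (d := d) (by omega)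
    by_cases hQV : Q = V
    · subst hQV
      rcases hVunique T h5 with h | h
      · exact zT h.symm
      · exact hTW h
    · have h6 : N Q (s V) z = 0 := F.Nz0' _ _ hQV
      refine F.no1 Q (s V) [z, T] (by simp [zT]) (by simp) ?_
      have := F.le Q (s V) [z, T] (by simp [zT])
      simp [h6, hdQ, hsV, hV, hT] at this ⊢
      omega
  obtain ⟨Y, hYm, hY0, hY1⟩ := F.ext U (s V) [z, W] (by simp [zW])
    (by simp [hUz, hUW, hdU, hsV, hV, hdW])
  simp [hUz, hUW, hdU, hsV, hV, hdW] at hYm hY1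
  have zY := Ne.symm hYm.1
  have WY := Ne.symm hYm.2
  have hY2 := F.ge2 Y hYm.1
  have hY3 : d Y ≤ 5 := mul_bd (r := 5) hY0 (by omega)
  have noT' := noT Y
  have hdY : d Y = 5 ∧ N U (s V) Y = 1 := by
    rcases (by omega : d Y = 2 ∨ d Y = 3 ∨ d Y = 4 ∨ d Y = 5) with h | h | h | h
    · exfalso
      rw [h] at hY1
      rcases (by omega : N U (s V) Y = 1 ∨ N U (s V) Y = 2) with h' | h'
      · obtain ⟨T, hTm, hT0, hT1⟩ := F.ext U (s V) [z, W, Y] (by simp [zW, zY, WY])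
          (by simp [hUz, hUW, hdU, hsV, hV, hdW, h, h'])
        simp [hUz, hUW, hdU, hsV, hV, hdW, h, h'] at hTm hT1
        have hT2 := F.ge2 T hTm.1
        have hT3 : d T ≤ 3 := mul_bd (r := 3) hT0 (by omega)
        rcases (by omega : d T = 2 ∨ d T = 3) with h2 | h2
        · rw [h2] at hT1
          refine F.no1 U (s V) [z, W, Y, T] (by simp [zW, zY, WY, Ne.symm hTm.1,
            Ne.symm hTm.2.1, Ne.symm hTm.2.2]) (by simp) ?_
          simp [hUz, hUW, hdU, hsV, hV, hdW, h, h', h2]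
          omega
        · have := noT T h2 hTm.2.1
          omega
      · refine F.no1 U (s V) [z, W, Y] (by simp [zW, zY, WY]) (by simp) ?_
        simp [hUz, hUW, hdU, hsV, hV, hdW, h, h']
    · have := noT' h hYm.2
      omega
    · exfalso
      rw [h] at hY1
      refine F.no1 U (s V) [z, W, Y] (by simp [zW, zY, WY]) (by simp) ?_
      simp [hUz, hUW, hdU, hsV, hV, hdW, h]
      omega
    · rw [h] at hY1; exact ⟨h, by omega⟩
  obtain ⟨hdY, hNY⟩ := hdY
  -- Y V = U + 6
  have hYVU : N Y V U = 1 := by rw [F.hF]; exact hNY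
  have hYVz : N Y V z = 0 := F.Nz0 _ _ (by omega)
  have claim : ∀ Z, Z ≠ z → Z ≠ U → 0 < N Y V Z → 4 ≤ d Z ∧ (d Z = 5 → False) := by
    intro Z hZz hZU hZ
    have h1 : N Z (s V) Y ≠ 0 := by rw [F.hF, F.ss]; omega
    have h2 := F.le Z (s V) [Y] (by simp)
    simp [hsV, hV, hdY] at h2
    have : d Z ≠ 3 := by
      intro h3
      have h4 : N Z (s V) z = 0 := F.Nz0 _ _ (by omega)
      refine F.no1 Z (s V) [z, Y] (by simp [zY]) (by simp) ?_
      simp [h4, hsV, hV, hdY, h3] at h2 ⊢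
      omega
    refine ⟨by omega, ?_⟩
    intro h5
    have h6 := F.le Y V [z, U, Z] (by simp [zU, Ne.symm hZz, Ne.symm hZU])
    refine F.no1 Y V [z, U, Z] (by simp [zU, Ne.symm hZz, Ne.symm hZU]) (by simp) ?_
    simp [hYVz, hYVU, hdU, hdY, hV, h5] at h6 ⊢
    omega
  obtain ⟨Z, hZm, hZ0, hZ1⟩ := F.ext Y V [z, U] (by simp [zU]) (by simp [hYVz, hYVU, hdU, hdY, hV])
  simp [hYVz, hYVU, hdU, hdY, hV] at hZm hZ1
  have hZ3 : d Z ≤ 6 := mul_bd (r := 6) hZ0 (by omega)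
  obtain ⟨hc1, hc2⟩ := claim Z hZm.1 hZm.2 hZ0
  rcases (by omega : d Z = 4 ∨ d Z = 5 ∨ d Z = 6) with h | h | h
  · rw [h] at hZ1
    have h1 : N Y V Z = 1 := by omega
    obtain ⟨K, hKm, hK0, hK1⟩ := F.ext Y V [z, U, Z] (by simp [zU, Ne.symm hZm.1, Ne.symm hZm.2])
      (by simp [hYVz, hYVU, hdU, hdY, hV, h, h1])
    simp [hYVz, hYVU, hdU, hdY, hV, h, h1] at hKm hK1
    have hK3 : d K ≤ 2 := mul_bd (r := 2) hK0 (by omega)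
    have := (claim K hKm.1 hKm.2.1 hK0).1
    omega
  · exact hc2 h
  · have UV : U ≠ V := hUm.2
    have := list_sum_le (fun i => d i ^ 2) [z, V, W, U, Y, Z] (by
      simp [zV, zW, zU, zY, VW, Ne.symm UV, WY, Ne.symm hZm.1, Ne.symm hZm.2]
      refine ⟨⟨?_, ?_⟩, ⟨?_, ?_⟩, ?_, ?_⟩ <;> exact ne_of_d (d := d) (by omega))
    simp [dz, hV, hdW, hdU, hdY, h] at this
    omega

end
end SSHopf

namespace SSHopf
section
variable {ι : Type} [Fintype ι] [DecidableEq ι] {d : ι → ℕ} {N : ι → ι → ι → ℕ} {z : ι}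
    {s : ι → ι}

theorem FD.ge3 (F : FD ι d N z s) (hhi : ∑ i, d i ^ 2 < 60) (k : ι) (h : k ≠ z) : 3 ≤ d k := by
  have h1 := F.ge2 k h
  have h2 := F.no2 hhi k
  omega

theorem FD.no3 (F : FD ι d N z s) (hhi : ∑ i, d i ^ 2 < 60) (X : ι) : d X ≠ 3 := by
  intro hX
  have dz := F.dz
  have hg := F.ge3 hhi
  have zX : z ≠ X := ne_of_d (d := d) (by omega)
  have hsX := F.ds X
  have hXz := F.Nzz X
  have sq := list_sum_le (fun i => d i ^ 2)
  -- a component of dimension 4 or 5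
  have hA : ∃ A, A ≠ z ∧ 0 < N X (s X) A ∧ (d A = 4 ∨ (d A = 5 ∧ N X (s X) A = 1)) := by
    obtain ⟨A, hAm, hA0, hA1⟩ := F.ext X (s X) [z] (by simp) (by simp [hXz, hX, hsX, dz])
    simp [hXz, hX, hsX, dz] at hAm hA1
    have hA3 := hg A hAm
    have hA4 : d A ≤ 8 := mul_bd (r := 8) hA0 (by omega)
    have hA5 : d A = 3 ∨ d A = 4 ∨ d A = 5 := by
      by_contra hc
      have h1 : N X (s X) A = 1 := by
        have : 6 ≤ d A := by omega
        have : N X (s X) A < 2 := by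
          by_contra h2
          have : 2 * 6 ≤ N X (s X) A * d A := Nat.mul_le_mul (by omega) (by omega)
          omega
        omega
      rw [h1] at hA1
      have h3 := sq [z, A] (by simp [Ne.symm hAm])
      simp [dz] at h3
      have h4 : d A < 8 := by
        by_contra h5
        have : d A = 8 := by omega
        simp [this] at h3
        omega
      obtain ⟨B, hBm, hB0, hB1⟩ := F.ext X (s X) [z, A] (by simp [Ne.symm hAm])
        (by simp [hXz, hX, hsX, dz, h1]; omega)
      simp [hXz, hX, hsX, dz, h1] at hBm hB1
      have hB3 := hg B hBm.1
      have := mul_bd (r := 2) (d := d B) hB0 (by omega)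
      omega
    rcases hA5 with h | h | h
    · rw [h] at hA1
      rcases (by omega : N X (s X) A = 1 ∨ N X (s X) A = 2) with h1 | h1
      · obtain ⟨B, hBm, hB0, hB1⟩ := F.ext X (s X) [z, A] (by simp [Ne.symm hAm])
          (by simp [hXz, hX, hsX, dz, h1, h])
        simp [hXz, hX, hsX, dz, h1, h] at hBm hB1
        have hB3 := hg B hBm.1
        have := mul_bd (r := 5) (d := d B) hB0 (by omega)
        rcases (by omega : d B = 3 ∨ d B = 4 ∨ d B = 5) with h2 | h2 | h2
        · exfalso
          rw [h2] at hB1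
          have h3 : N X (s X) B = 1 := by omega
          obtain ⟨C, hCm, hC0, hC1⟩ := F.ext X (s X) [z, A, B] (by simp [Ne.symm hAm, Ne.symm hBm.1,
            Ne.symm hBm.2]) (by simp [hXz, hX, hsX, dz, h1, h, h2, h3])
          simp [hXz, hX, hsX, dz, h1, h, h2, h3] at hCm hC1
          have hC3 := hg C hCm.1
          have := mul_bd (r := 2) (d := d C) hC0 (by omega)
          omega
        · exact ⟨B, hBm.1, hB0, Or.inl h2⟩
        · rw [h2] at hB1
          exact ⟨B, hBm.1, hB0, Or.inr ⟨h2, by omega⟩⟩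
      · exfalso
        obtain ⟨C, hCm, hC0, hC1⟩ := F.ext X (s X) [z, A] (by simp [Ne.symm hAm])
          (by simp [hXz, hX, hsX, dz, h1, h])
        simp [hXz, hX, hsX, dz, h1, h] at hCm hC1
        have hC3 := hg C hCm.1
        have := mul_bd (r := 2) (d := d C) hC0 (by omega)
        omega
    · exact ⟨A, hAm, hA0, Or.inl h⟩
    · rw [h] at hA1
      exact ⟨A, hAm, hA0, Or.inr ⟨h, by omega⟩⟩
  obtain ⟨A, hAz, hA0, hA⟩ := hA
  have hAX : N A X X = N X (s X) A := F.hF _ _ _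
  have zA := Ne.symm hAz
  rcases hA with hA | ⟨hA, hA1⟩
  · -- dim 4
    have XA : X ≠ A := ne_of_d (d := d) (by omega)
    have hAXz : N A X z = 0 := F.Nz0 _ _ (by omega)
    -- other components have dim 4
    have hK : ∀ K, K ≠ z → K ≠ X → 0 < N A X K → d K = 4 := by
      intro K hKz hKX hK0
      have h3 := hg K hKz
      have hle := F.le A X [X, K] (by simp [Ne.symm hKX])
      simp [hAX, hX, hA] at hle
      have hK9 : d K ≤ 9 := mul_bd (r := 9) hK0 (by omega)
      rcases (by omega : d K = 3 ∨ d K = 4 ∨ d K = 5 ∨ 6 ≤ d K) with h | h | h | h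
      · exfalso
        have h1 : N K (s X) A ≠ 0 := by rw [F.hF, F.ss]; omega
        have h2 : N K (s X) z = 0 := F.Nz0' _ _ hKX
        have h4 := F.le K (s X) [z, A] (by simp [zA])
        simp [h2, h, hsX, hX, hA] at h4
        rcases (by omega : N K (s X) A = 1 ∨ N K (s X) A = 2) with h5 | h5
        · obtain ⟨B, hBm, hB0, hB1⟩ := F.ext K (s X) [z, A] (by simp [zA])
            (by simp [h2, h, hsX, hX, hA, h5])
          simp [h2, h, hsX, hX, hA, h5] at hBm hB1
          have hB3 := hg B hBm.1
          have := mul_bd (r := 5) (d := d B) hB0 (by omega)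
          rcases (by omega : d B = 3 ∨ d B = 4 ∨ d B = 5) with h6 | h6 | h6
          · rw [h6] at hB1
            have h7 : N K (s X) B = 1 := by omega
            obtain ⟨C, hCm, hC0, hC1⟩ := F.ext K (s X) [z, A, B] (by simp [zA, Ne.symm hBm.1,
              Ne.symm hBm.2]) (by simp [h2, h, hsX, hX, hA, h5, h6, h7])
            simp [h2, h, hsX, hX, hA, h5, h6, h7] at hCm hC1
            have hC3 := hg C hCm.1
            have := mul_bd (r := 2) (d := d C) hC0 (by omega)
            omega
          · rw [h6] at hB1
            have h7 : N K (s X) B = 1 := by omega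
            refine F.no1 K (s X) [z, A, B] (by simp [zA, Ne.symm hBm.1, Ne.symm hBm.2]) (by simp) ?_
            simp [h2, h, hsX, hX, hA, h5, h6, h7]
          · have := sq [z, X, K, A, B] (by
              simp [zX, Ne.symm hKz, zA, Ne.symm hBm.1, Ne.symm hKX, XA, Ne.symm hBm.2]
              refine ⟨?_, ?_, ?_⟩ <;> exact ne_of_d (d := d) (by omega))
            simp [dz, hX, h, hA, h6] at this
            omega
        · refine F.no1 K (s X) [z, A] (by simp [zA]) (by simp) ?_
          simp [h2, h, hsX, hX, hA, h5]
      · exact h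
      · exfalso
        -- 4+5+3 = 12: need 12 = 3c + 5n + rest
        have h1 : N A X K = 1 := by
          rw [h] at hle
          omega
        rw [h, h1] at hle
        have hc : N X (s X) A = 1 ∨ N X (s X) A = 2 := by omega
        rcases hc with hc | hc
        · -- a second 4-dim or other component of X X*
          obtain ⟨B, hBm, hB0, hB1⟩ := F.ext X (s X) [z, A] (by simp [zA])
            (by simp [hXz, hX, hsX, dz, hA, hc])
          simp [hXz, hX, hsX, dz, hA, hc] at hBm hB1
          have hB3 := hg B hBm.1
          have := mul_bd (r := 4) (d := d B) hB0 (by omega)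
          rcases (by omega : d B = 3 ∨ d B = 4) with h6 | h6
          · rw [h6] at hB1
            have h7 : N X (s X) B = 1 := by omega
            refine F.no1 X (s X) [z, A, B] (by simp [zA, Ne.symm hBm.1, Ne.symm hBm.2]) (by simp) ?_
            simp [hXz, hX, hsX, dz, hA, hc, h6, h7]
          · have := sq [z, X, A, B, K] (by
              simp [zX, Ne.symm hKz, zA, Ne.symm hBm.1, Ne.symm hKX, XA, Ne.symm hBm.2]
              refine ⟨?_, ?_, ?_⟩ <;> exact ne_of_d (d := d) (by omega))
            simp [dz, hX, h, hA, h6] at this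
            omega
        · refine F.no1 A X [z, X, K] (by simp [zX, Ne.symm hKz, Ne.symm hKX]) (by simp) ?_
          simp [hAXz, hAX, hX, hA, hc, h1, h]
      · exfalso
        have := sq [z, X, A, K] (by
          simp [zX, Ne.symm hKz, zA, Ne.symm hKX, XA]
          exact ne_of_d (d := d) (by omega))
        simp [dz, hX, hA] at this
        have : 6 ^ 2 ≤ d K ^ 2 := Nat.pow_le_pow_left h 2
        omega
    -- 12 = 3c + 4 * stuff
    have hc : N X (s X) A = 1 ∨ N X (s X) A = 2 := by
      have := F.le X (s X) [z, A] (by simp [zA])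
      simp [hXz, hX, hsX, dz, hA] at this
      omega
    have h4 : 4 ∣ 12 - N X (s X) A * 3 := by
      have h := F.hN A X
      rw [← Finset.add_sum_erase _ _ (Finset.mem_univ X), hAX, hX, hA] at h
      have h2 : 4 ∣ ∑ k ∈ Finset.univ.erase X, N A X k * d k := by
        apply Finset.dvd_sum
        intro k hk
        have hk' : k ≠ X := (Finset.mem_erase.1 hk).1
        by_cases h0 : N A X k = 0
        · simp [h0]
        · have : k ≠ z := by rintro rfl; exact h0 hAXz
          rw [hK k this hk' (Nat.pos_of_ne_zero h0)]
          exact dvd_mul_left _ _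
      omega
    omega
  · -- dim 5
    have XA : X ≠ A := ne_of_d (d := d) (by omega)
    have hAXz : N A X z = 0 := F.Nz0 _ _ (by omega)
    have hK : ∀ K, K ≠ z → K ≠ X → 0 < N A X K → d K = 5 := by
      intro K hKz hKX hK0
      have h3 := hg K hKz
      have h1 : N K (s X) A = N A X K := by rw [F.hF, F.ss]
      by_contra h5
      have hKA : K ≠ A := ne_of_d (d := d) (by omega)
      have h6 := sq [z, X, A, K] (by
          simp [zX, Ne.symm hKz, zA, Ne.symm hKX, XA, Ne.symm hKA])
      simp [dz, hX, hA] at h6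
      rcases (by omega : d K = 3 ∨ d K = 4 ∨ 5 ≤ d K) with h | h | h
      · have h2 : N K (s X) z = 0 := F.Nz0' _ _ hKX
        have h4 := F.le K (s X) [z, A] (by simp [zA])
        simp [h2, h, hsX, hX, hA] at h4
        have h7 : N K (s X) A = 1 := by omega
        obtain ⟨B, hBm, hB0, hB1⟩ := F.ext K (s X) [z, A] (by simp [zA])
            (by simp [h2, h, hsX, hX, hA, h7])
        simp [h2, h, hsX, hX, hA, h7] at hBm hB1
        have hB3 := hg B hBm.1
        have := mul_bd (r := 4) (d := d B) hB0 (by omega)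
        rcases (by omega : d B = 3 ∨ d B = 4) with h8 | h8
        · rw [h8] at hB1
          have h9 : N K (s X) B = 1 := by omega
          refine F.no1 K (s X) [z, A, B] (by simp [zA, Ne.symm hBm.1, Ne.symm hBm.2]) (by simp) ?_
          simp [h2, h, hsX, hX, hA, h7, h8, h9]
        · have := sq [z, X, K, A, B] (by
              simp [zX, Ne.symm hKz, zA, Ne.symm hBm.1, Ne.symm hKX, XA, hKA, Ne.symm hBm.2]
              refine ⟨?_, ?_⟩ <;> exact ne_of_d (d := d) (by omega))
          simp [dz, hX, h, hA, h8] at this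
          omega
      · -- K of dim 4; A X = X + 12
        have hle := F.le K (s X) [A] (by simp)
        simp [h1, hsX, hX, hA, h] at hle
        have hB : ∃ B, B ∉ [z, X, K] ∧ 0 < N A X B ∧
            3 + (N A X K * 4) + N A X B * d B ≤ 15 := by
          obtain ⟨B, hBm, hB0, hB1⟩ := F.ext A X [z, X, K] (by simp [zX, Ne.symm hKz, Ne.symm hKX])
            (by simp [hAXz, hAX, hA1, hX, hA, h]; omega)
          simp only [List.map_cons, List.map_nil, List.sum_cons, List.sum_nil, hAXz, hAX, hA1, hX, hA,
            h] at hB1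
          exact ⟨B, hBm, hB0, by omega⟩
        obtain ⟨B, hBm, hB0, hB1⟩ := hB
        simp at hBm
        have hB3 := hg B hBm.1
        have hB4 : d B ≠ 3 := by
          intro h8
          have := sq [z, X, A, K, B] (by
              simp [zX, Ne.symm hKz, zA, Ne.symm hBm.1, Ne.symm hKX, XA, Ne.symm hKA,
                Ne.symm hBm.2.1, Ne.symm hBm.2.2]
              exact ne_of_d (d := d) (by omega))
          simp [dz, hX, h, hA, h8] at this
          omega
        have hB5 : B = A := by
          by_contra hBA
          have := sq [z, X, A, K, B] (by
              simp [zX, Ne.symm hKz, zA, Ne.symm hBm.1, Ne.symm hKX, XA, Ne.symm hKA,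
                Ne.symm hBm.2.1, Ne.symm hBm.2.2, Ne.symm hBA])
          simp [dz, hX, h, hA] at this
          have : 4 ^ 2 ≤ d B ^ 2 := Nat.pow_le_pow_left (by omega) 2
          omega
        subst hB5
        -- 15 = 3 + 4 a + 5 b exactly
        have hex : 3 + N B X K * 4 + N B X B * 5 = 15 := by
          by_contra hne
          rw [hA] at hB1
          obtain ⟨C, hCm, hC0, hC1⟩ := F.ext B X [z, X, K, B] (by simp [zX, Ne.symm hKz, Ne.symm hKX,
            zA, XA, hKA]) (by simp [hAXz, hAX, hA1, hX, hA, h]; omega)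
          simp at hCm
          have hC3 := hg C hCm.1
          have := sq [z, X, B, K, C] (by
              simp [zX, Ne.symm hKz, zA, Ne.symm hCm.1, Ne.symm hKX, XA, Ne.symm hKA,
                Ne.symm hCm.2.1, Ne.symm hCm.2.2.1, Ne.symm hCm.2.2.2])
          simp [dz, hX, h, hA] at this
          have : 3 ^ 2 ≤ d C ^ 2 := Nat.pow_le_pow_left (by omega) 2
          omega
        omega
      · have : 5 ^ 2 ≤ d K ^ 2 := Nat.pow_le_pow_left (by omega) 2
        omega
    have h4 : 5 ∣ 12 := by
      have h := F.hN A X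
      rw [← Finset.add_sum_erase _ _ (Finset.mem_univ X), hAX, hX, hA, hA1] at h
      have h2 : 5 ∣ ∑ k ∈ Finset.univ.erase X, N A X k * d k := by
        apply Finset.dvd_sum
        intro k hk
        have hk' : k ≠ X := (Finset.mem_erase.1 hk).1
        by_cases h0 : N A X k = 0
        · simp [h0]
        · have : k ≠ z := by rintro rfl; exact h0 hAXz
          rw [hK k this hk' (Nat.pos_of_ne_zero h0)]
          exact dvd_mul_left _ _
      omega
    omega

theorem FD.no4 (F : FD ι d N z s) (hhi : ∑ i, d i ^ 2 < 60) (X : ι) : d X ≠ 4 := by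
  intro hX
  have dz := F.dz
  have hg : ∀ k, k ≠ z → 4 ≤ d k := fun k h => by
    have h1 := F.ge3 hhi k h
    have h2 := F.no3 hhi k
    omega
  have zX : z ≠ X := ne_of_d (d := d) (by omega)
  have hsX := F.ds X
  have hXz := F.Nzz X
  have sq := list_sum_le (fun i => d i ^ 2)
  have hle6 : ∀ k, d k ≤ 6 := by
    intro k
    by_contra h
    have := sq [z, X, k] (by
      simp [zX]
      refine ⟨?_, ?_⟩ <;> exact ne_of_d (d := d) (by omega))
    simp [dz, hX] at this
    have : 7 ^ 2 ≤ d k ^ 2 := Nat.pow_le_pow_left (by omega) 2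
    omega
  have hne : ∃ A, d A = 5 := by
    by_contra! hc
    have h := F.hN X (s X)
    rw [← Finset.add_sum_erase _ _ (Finset.mem_univ z), hXz, dz, hX, hsX, hX] at h
    have h2 : 2 ∣ ∑ k ∈ Finset.univ.erase z, N X (s X) k * d k := by
        apply Finset.dvd_sum
        intro k hk
        have hk' : k ≠ z := (Finset.mem_erase.1 hk).1
        have h1 := hg k hk'
        have h2 := hle6 k
        have h3 := hc k
        apply dvd_mul_of_dvd_right
        omega
    omega
  obtain ⟨A, hA⟩ := hne
  have zA : z ≠ A := ne_of_d (d := d) (by omega)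
  have XA : X ≠ A := ne_of_d (d := d) (by omega)
  have hdim : ∀ k, k ≠ z → k ≠ A → d k = 4 := by
    intro k hkz hkA
    by_contra h
    have h1 := hg k hkz
    have := sq [z, X, A, k] (by
      simp [zX, zA, XA, Ne.symm hkz, Ne.symm hkA]
      exact ne_of_d (d := d) (by omega))
    simp [dz, hX, hA] at this
    have : 5 ^ 2 ≤ d k ^ 2 := Nat.pow_le_pow_left (by omega) 2
    omega
  -- general decomposition
  have hdec : ∀ i j, ∃ m, d i * d j = N i j z + N i j A * 5 + 4 * m := by
    intro i j
    have h := F.hN i j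
    rw [← Finset.add_sum_erase _ _ (Finset.mem_univ z),
      ← Finset.add_sum_erase _ _ (Finset.mem_erase.2 ⟨Ne.symm zA, Finset.mem_univ A⟩), dz, hA] at h
    have h2 : 4 ∣ ∑ k ∈ (Finset.univ.erase z).erase A, N i j k * d k := by
        apply Finset.dvd_sum
        intro k hk
        simp at hk
        rw [hdim k hk.2 hk.1]
        exact dvd_mul_left _ _
    obtain ⟨m, hm⟩ := h2
    exact ⟨m, by omega⟩
  have h3 : N X (s X) A = 3 := by
    obtain ⟨m, hm⟩ := hdec X (s X)
    rw [hXz, hX, hsX, hX] at hm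
    omega
  have hAXX : N A X X = 3 := by rw [F.hF]; exact h3
  have hAXz : N A X z = 0 := F.Nz0 _ _ (by omega)
  -- no other component in A X
  have hK : ∀ K, K ≠ X → K ≠ A → N A X K = 0 := by
    intro K hKX hKA
    by_cases hKz : K = z
    · rw [hKz]; exact hAXz
    have h1 : N K (s X) A = N A X K := by rw [F.hF, F.ss]
    have h2 : N K (s X) z = 0 := F.Nz0' _ _ hKX
    obtain ⟨m, hm⟩ := hdec K (s X)
    rw [h1, h2, hdim K hKz hKA, hsX, hX] at hm
    have := F.le A X [X, K] (by simp [Ne.symm hKX])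
    simp [hAXX, hX, hA, hdim K hKz hKA] at this
    omega
  have h := F.hN A X
  rw [← Finset.add_sum_erase _ _ (Finset.mem_univ X),
      ← Finset.add_sum_erase _ _ (Finset.mem_erase.2 ⟨Ne.symm XA, Finset.mem_univ A⟩), hX, hA, hAXX,
      Finset.sum_eq_zero] at h
  · omega
  · intro k hk
    simp at hk
    rw [hK k hk.2 hk.1, zero_mul]

theorem FD.combi (F : FD ι d N z s) (hhi : ∑ i, d i ^ 2 < 60) (hlo : 1 < ∑ i, d i ^ 2) : False := by
  have dz := F.dz
  have hg : ∀ k, k ≠ z → 5 ≤ d k := fun k h => by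
    have h1 := F.ge3 hhi k h
    have h2 := F.no3 hhi k
    have h3 := F.no4 hhi k
    omega
  have sq := list_sum_le (fun i => d i ^ 2)
  obtain ⟨X, hXm, hX0, hX1⟩ := list_ext (fun i => d i ^ 2) [z] (by simp) (by simpa [dz] using hlo)
  simp at hXm
  have hX5 := hg X hXm
  have hX7 : d X ≤ 7 := by
    by_contra h
    have := sq [z, X] (by simp [Ne.symm hXm])
    simp [dz] at this
    have : 8 ^ 2 ≤ d X ^ 2 := Nat.pow_le_pow_left (by omega) 2
    omega
  have hall : ∀ k, k ≠ z → d k = d X := by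
    intro k hk
    by_contra hne
    have h1 := sq [z, X, k] (by simp [Ne.symm hXm, Ne.symm hk]; exact ne_of_d (d := d) (Ne.symm hne))
    simp [dz] at h1
    have h2 := hg k hk
    rcases (by omega : d X = 5 ∨ 6 ≤ d X) with h | h
    · have : 6 ^ 2 ≤ d k ^ 2 := Nat.pow_le_pow_left (by omega) 2
      rw [h] at h1
      omega
    · have : 6 ^ 2 ≤ d X ^ 2 := Nat.pow_le_pow_left (by omega) 2
      have : 5 ^ 2 ≤ d k ^ 2 := Nat.pow_le_pow_left (by omega) 2
      omega
  have h := F.hN X (s X)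
  rw [← Finset.add_sum_erase _ _ (Finset.mem_univ z), F.Nzz, dz, F.ds] at h
  have h2 : d X ∣ ∑ k ∈ Finset.univ.erase z, N X (s X) k * d k := by
    apply Finset.dvd_sum
    intro k hk
    have hk' : k ≠ z := (Finset.mem_erase.1 hk).1
    rw [hall k hk']
    exact dvd_mul_left _ _
  have h3 : d X ∣ 1 * 1 := by
    rw [← Nat.dvd_add_left h2, ← h]
    exact dvd_mul_right _ _
  have := Nat.le_of_dvd (by norm_num) h3
  omega
end
end SSHopf

namespace SSHopf
section
open TensorProduct Coalgebra WithConv HopfAlgebra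
variable {H : Type*} [Ring H] [HopfAlgebra ℂ H]

/-- left inclusion -/
noncomputable def iL (H : Type*) [Ring H] [HopfAlgebra ℂ H] : H →ₐ[ℂ] H ⊗[ℂ] H :=
  Algebra.TensorProduct.includeLeft
/-- right inclusion -/
noncomputable def iR (H : Type*) [Ring H] [HopfAlgebra ℂ H] : H →ₐ[ℂ] H ⊗[ℂ] H :=
  Algebra.TensorProduct.includeRight
/-- antipode -/
noncomputable abbrev aS (H : Type*) [Ring H] [HopfAlgebra ℂ H] : H →ₗ[ℂ] H :=
  antipode ℂ (A := H)

@[simp] theorem iL_apply (x : H) : iL H x = x ⊗ₜ 1 := rfl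
@[simp] theorem iR_apply (x : H) : iR H x = 1 ⊗ₜ x := rfl

theorem conv_comul : (toConv (comul (R := ℂ) (A := H)) : WithConv (H →ₗ[ℂ] H ⊗[ℂ] H)) =
    toConv (iL H).toLinearMap * toConv (iR H).toLinearMap := by
  apply WithConv.ext
  ext x
  have := (ℛ ℂ x).convMul_apply (toConv (iL H).toLinearMap) (toConv (iR H).toLinearMap)
  rw [this]
  simp [(ℛ ℂ x).eq]

theorem hom_conv (f : H →ₐ[ℂ] H ⊗[ℂ] H) :
    (toConv f.toLinearMap * toConv (f.toLinearMap ∘ₗ aS H) : WithConv (H →ₗ[ℂ] H ⊗[ℂ] H)) = 1 := by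
  have := LinearMap.algHom_comp_convMul_distrib f (toConv LinearMap.id) (toConv (aS H))
  rw [LinearMap.id_mul_antipode] at this
  apply WithConv.ext
  simp only [ofConv_toConv, LinearMap.comp_id] at this
  rw [← this]
  ext x
  simp

theorem hom_conv' (f : H →ₐ[ℂ] H ⊗[ℂ] H) :
    (toConv (f.toLinearMap ∘ₗ aS H) * toConv f.toLinearMap : WithConv (H →ₗ[ℂ] H ⊗[ℂ] H)) = 1 := by
  have := LinearMap.algHom_comp_convMul_distrib f (toConv (aS H)) (toConv LinearMap.id)
  rw [LinearMap.antipode_mul_id] at this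
  apply WithConv.ext
  simp only [ofConv_toConv, LinearMap.comp_id] at this
  rw [← this]
  ext x
  simp

/-- sum over a representation -/
theorem K1 (h : H) : ∑ i ∈ (ℛ ℂ h).index,
    comul (R := ℂ) ((ℛ ℂ h).left i) * ((1 : H) ⊗ₜ[ℂ] aS H ((ℛ ℂ h).right i)) = h ⊗ₜ 1 := by
  have h1 : (toConv (comul (R := ℂ) (A := H)) : WithConv (H →ₗ[ℂ] H ⊗[ℂ] H)) *
      toConv ((iR H).toLinearMap ∘ₗ aS H) = toConv (iL H).toLinearMap := by
    rw [conv_comul, mul_assoc, hom_conv, mul_one]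
  have h2 := congrArg (fun f => f.ofConv h) h1
  simp only [] at h2
  rw [(ℛ ℂ h).convMul_apply] at h2
  simpa using h2

theorem K2 (h : H) : ∑ i ∈ (ℛ ℂ h).index,
    (TensorProduct.map LinearMap.id (aS H) (comul (R := ℂ) ((ℛ ℂ h).left i))) *
      ((1 : H) ⊗ₜ[ℂ] ((ℛ ℂ h).right i)) = h ⊗ₜ 1 := by
  have h0 : (toConv (TensorProduct.map LinearMap.id (aS H) ∘ₗ comul (R := ℂ) (A := H)) :
      WithConv (H →ₗ[ℂ] H ⊗[ℂ] H)) =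
      toConv (iL H).toLinearMap * toConv ((iR H).toLinearMap ∘ₗ aS H) := by
    apply WithConv.ext
    ext x
    rw [(ℛ ℂ x).convMul_apply]
    simp [← (ℛ ℂ x).eq]
  have h1 : (toConv (TensorProduct.map LinearMap.id (aS H) ∘ₗ comul (R := ℂ) (A := H)) :
      WithConv (H →ₗ[ℂ] H ⊗[ℂ] H)) *
      toConv ((iR H).toLinearMap) = toConv (iL H).toLinearMap := by
    rw [h0, mul_assoc, hom_conv', mul_one]
  have h2 := congrArg (fun f => f.ofConv h) h1
  simp only [] at h2
  rw [(ℛ ℂ h).convMul_apply] at h2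
  simpa using h2

theorem comul_S (h : H) : comul (R := ℂ) (aS H h) =
    TensorProduct.map (aS H) (aS H) (TensorProduct.comm ℂ H H (comul h)) := by
  have h0 : (toConv (TensorProduct.map (aS H) (aS H) ∘ₗ (TensorProduct.comm ℂ H H).toLinearMap ∘ₗ
      comul (R := ℂ) (A := H)) : WithConv (H →ₗ[ℂ] H ⊗[ℂ] H)) =
      toConv ((iR H).toLinearMap ∘ₗ aS H) * toConv ((iL H).toLinearMap ∘ₗ aS H) := by
    apply WithConv.ext
    ext x
    rw [(ℛ ℂ x).convMul_apply]
    simp [← (ℛ ℂ x).eq]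
  have h1 : (toConv (TensorProduct.map (aS H) (aS H) ∘ₗ (TensorProduct.comm ℂ H H).toLinearMap ∘ₗ
      comul (R := ℂ) (A := H)) : WithConv (H →ₗ[ℂ] H ⊗[ℂ] H)) *
      toConv (comul (R := ℂ) (A := H)) = 1 := by
    rw [h0, conv_comul, mul_assoc, ← mul_assoc _ (toConv (iL H).toLinearMap), hom_conv', one_mul,
      hom_conv']
  have h2 := left_inv_eq_right_inv h1 LinearMap.comul_right_inv
  have h3 := congrArg (fun f => f.ofConv h) h2
  simpa using h3.symm

theorem comul_SS (h : H) : comul (R := ℂ) (aS H (aS H h)) =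
    TensorProduct.map (aS H ∘ₗ aS H) (aS H ∘ₗ aS H) (comul h) := by
  rw [comul_S, comul_S, ← (ℛ ℂ h).eq]
  simp

/-- Sweedler pairing: evaluate two functionals -/
noncomputable def pr (f g : H →ₗ[ℂ] ℂ) : H ⊗[ℂ] H →ₗ[ℂ] ℂ :=
  LinearMap.mul' ℂ ℂ ∘ₗ TensorProduct.map f g

@[simp] theorem pr_tmul (f g : H →ₗ[ℂ] ℂ) (x y : H) : pr f g (x ⊗ₜ y) = f x * g y := rfl

/-- convolution of functionals -/
noncomputable def cv (f g : H →ₗ[ℂ] ℂ) : H →ₗ[ℂ] ℂ := pr f g ∘ₗ comul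

theorem cv_def (f g : H →ₗ[ℂ] ℂ) : cv f g = (toConv f * toConv g).ofConv := rfl

theorem cv_assoc (f g k : H →ₗ[ℂ] ℂ) : cv (cv f g) k = cv f (cv g k) := by
  simp only [cv_def]
  exact congrArg _ (mul_assoc (toConv f) (toConv g) (toConv k))

theorem cv_S (f g : H →ₗ[ℂ] ℂ) : cv f g ∘ₗ aS H = cv (g ∘ₗ aS H) (f ∘ₗ aS H) := by
  ext h
  simp only [cv, LinearMap.comp_apply]
  rw [comul_S, ← (ℛ ℂ h).eq]
  simp [mul_comm]

theorem counit_cv (f : H →ₗ[ℂ] ℂ) : cv counit f = f := by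
  have := one_mul (toConv f)
  have h := congrArg WithConv.ofConv this
  exact h

theorem cv_counit (f : H →ₗ[ℂ] ℂ) : cv f counit = f := by
  have := mul_one (toConv f)
  have h := congrArg WithConv.ofConv this
  exact h

theorem cv_sum_left {ι : Type*} (s : Finset ι) (f : ι → H →ₗ[ℂ] ℂ) (g : H →ₗ[ℂ] ℂ) :
    cv (∑ i ∈ s, f i) g = ∑ i ∈ s, cv (f i) g := by
  simp only [cv_def, toConv_sum, Finset.sum_mul, ofConv_sum]

theorem cv_sum_right {ι : Type*} (s : Finset ι) (f : ι → H →ₗ[ℂ] ℂ) (g : H →ₗ[ℂ] ℂ) :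
    cv g (∑ i ∈ s, f i) = ∑ i ∈ s, cv g (f i) := by
  simp only [cv_def, toConv_sum, Finset.mul_sum, ofConv_sum]

theorem cv_smul_left (c : ℂ) (f g : H →ₗ[ℂ] ℂ) : cv (c • f) g = c • cv f g := by
  simp only [cv_def, toConv_smul, smul_mul_assoc, ofConv_smul]

theorem cv_smul_right (c : ℂ) (f g : H →ₗ[ℂ] ℂ) : cv f (c • g) = c • cv f g := by
  simp only [cv_def, toConv_smul, mul_smul_comm, ofConv_smul]

theorem casimir_gen (h : H) (y : H ⊗[ℂ] H) :
    ∑ i ∈ (ℛ ℂ h).index, TensorProduct.map LinearMap.id (aS H)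
      (comul (R := ℂ) ((ℛ ℂ h).left i) * y) * ((1 : H) ⊗ₜ[ℂ] ((ℛ ℂ h).right i)) =
    (h ⊗ₜ 1) * TensorProduct.map LinearMap.id (aS H) y := by
  induction y with
  | zero => simp
  | add a b ha hb =>
    simp only [mul_add, map_add, add_mul, Finset.sum_add_distrib, ha, hb]
  | tmul p q =>
    have key : ∀ (x : H ⊗[ℂ] H) (r : H), TensorProduct.map LinearMap.id (aS H)
        (x * (p ⊗ₜ q)) * ((1 : H) ⊗ₜ[ℂ] r) =
        TensorProduct.map (LinearMap.mulRight ℂ p) (LinearMap.mulLeft ℂ (aS H q))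
        (TensorProduct.map LinearMap.id (aS H) x * ((1 : H) ⊗ₜ[ℂ] r)) := by
      intro x r
      induction x with
      | zero => simp
      | add a b ha hb => simp only [add_mul, map_add, ha, hb]
      | tmul a b => simp [antipode_mul_antidistrib, mul_assoc]
    simp only [key]
    rw [← map_sum, K2]
    simp

theorem casimir (L : H) (hL : ∀ x : H, x * L = counit (R := ℂ) x • L) (h : H) :
    (h ⊗ₜ 1) * TensorProduct.map LinearMap.id (aS H) (comul (R := ℂ) L) =
     TensorProduct.map LinearMap.id (aS H) (comul (R := ℂ) L) * (1 ⊗ₜ h) := by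
  rw [← casimir_gen]
  simp only [← Bialgebra.comul_mul, hL, map_smul, smul_mul_assoc]
  simp only [← mul_smul_comm, ← Finset.mul_sum, ← TensorProduct.tmul_smul]
  rw [← TensorProduct.tmul_sum, Coalgebra.sum_counit_smul]

theorem pr_S (f g : H →ₗ[ℂ] ℂ) (x : H ⊗[ℂ] H) :
    pr f (g ∘ₗ aS H) x = pr f g (TensorProduct.map LinearMap.id (aS H) x) := by
  induction x with
  | zero => simp
  | add a b ha hb => simp only [map_add, ha, hb]
  | tmul a b => simp
end
end SSHopf

namespace SSHopf
section
open TensorProduct Coalgebra WithConv HopfAlgebra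
variable {A : Type*} [Ring A] [Algebra ℂ A]
variable {n : ℕ} {d : Fin n → ℕ}
  (e : A ≃ₐ[ℂ] ((i : Fin n) → Matrix (Fin (d i)) (Fin (d i)) ℂ))

/-- matrix coefficient -/
noncomputable def mc (i : Fin n) (a b : Fin (d i)) : A →ₗ[ℂ] ℂ where
  toFun h := e h i a b
  map_add' x y := by simp
  map_smul' c x := by simp

theorem mc_apply (i : Fin n) (a b : Fin (d i)) (x : A) : mc e i a b x = e x i a b := rfl

/-- matrix units -/
noncomputable def Eu (i : Fin n) (a b : Fin (d i)) : A := e.symm (Pi.single i (Matrix.single a b 1))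

/-- characters -/
noncomputable def ch (i : Fin n) : A →ₗ[ℂ] ℂ := ∑ a, mc e i a a

theorem ch_apply (i : Fin n) (x : A) : ch e i x = (e x i).trace := by
  simp [ch, Matrix.trace, mc_apply]

theorem mc_mul (i : Fin n) (a b : Fin (d i)) (x y : A) :
    mc e i a b (x * y) = ∑ c, mc e i a c x * mc e i c b y := by
  simp [mc_apply, Matrix.mul_apply]

theorem mc_left (i : Fin n) (a b c : Fin (d i)) (x : A) :
    mc e i a c (Eu e i a b * x) = mc e i b c x := by
  simp [mc_apply, Eu]

theorem mc_right (i : Fin n) (a b c c' : Fin (d i)) (x : A) :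
    mc e i c c' (x * Eu e i a b) = if c' = b then mc e i c a x else 0 := by
  simp only [mc_apply, Eu, map_mul, AlgEquiv.apply_symm_apply, Pi.mul_apply, Pi.single_eq_same]
  split_ifs with h
  · subst h; simp
  · rw [Matrix.mul_single_apply_of_ne]; exact h

theorem mc_right_ne (i j : Fin n) (hij : i ≠ j) (a b : Fin (d i)) (c c' : Fin (d j)) (x : A) :
    mc e j c c' (x * Eu e i a b) = 0 := by
  simp [mc_apply, Eu, Pi.single_eq_of_ne hij.symm]

theorem mc_Eu (i : Fin n) (a b c c' : Fin (d i)) :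
    mc e i c c' (Eu e i a b) = if c = a ∧ c' = b then 1 else 0 := by
  have := mc_right e i a b c c' 1
  rw [one_mul] at this
  rw [this]
  simp [mc_apply, Matrix.one_apply]
  split_ifs <;> simp_all

theorem mc_Eu_ne (i j : Fin n) (hij : i ≠ j) (a b : Fin (d i)) (c c' : Fin (d j)) :
    mc e j c c' (Eu e i a b) = 0 := by
  have := mc_right_ne e i j hij a b c c' 1
  rwa [one_mul] at this

theorem mc_ext {x y : A} (h : ∀ i a b, mc e i a b x = mc e i a b y) : x = y := by
  apply e.injective
  ext i a b
  exact h i a b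

theorem Eu_mul (i : Fin n) (a b c c' : Fin (d i)) :
    Eu e i a b * Eu e i c c' = if b = c then Eu e i a c' else 0 := by
  apply e.injective
  simp only [Eu, map_mul, AlgEquiv.apply_symm_apply, ← Pi.single_mul]
  split_ifs with h
  · subst h; simp
  · rw [Matrix.single_mul_single_of_ne _ _ _ _ h]; simp

theorem fun_ext {M : Type*} [AddCommMonoid M] [Module ℂ M] {f g : A →ₗ[ℂ] M} (h : ∀ i a b, f (Eu e i a b) = g (Eu e i a b)) : f = g := by
  have : f ∘ₗ e.symm.toLinearMap = g ∘ₗ e.symm.toLinearMap := by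
    apply LinearMap.pi_ext'
    intro i
    apply Matrix.ext_linearMap ℂ
    intro a b
    ext
    simpa [Eu] using h i a b
  ext x
  have := congrArg (fun F => F (e x)) this
  simpa using this

theorem ch_Eu_ne (i j : Fin n) (hij : i ≠ j) (a b : Fin (d i)) : ch e j (Eu e i a b) = 0 := by
  simp [ch, mc_Eu_ne e i j hij]

theorem ch_Eu (i : Fin n) (a b : Fin (d i)) : ch e i (Eu e i a b) = if a = b then 1 else 0 := by
  simp only [ch, LinearMap.sum_apply, mc_Eu]
  split_ifs with h
  · subst h; simp
  · apply Finset.sum_eq_zero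
    intro c _
    rw [if_neg]
    rintro ⟨rfl, rfl⟩
    exact h rfl

theorem ch_comm (i : Fin n) (x y : A) : ch e i (x * y) = ch e i (y * x) := by
  simp only [ch_apply, map_mul, Pi.mul_apply]
  exact Matrix.trace_mul_comm _ _

theorem ch_one (i : Fin n) : ch e i 1 = d i := by
  simp [ch_apply]

theorem sum_sq (e : A ≃ₐ[ℂ] ((i : Fin n) → Matrix (Fin (d i)) (Fin (d i)) ℂ)) : ∑ i, d i ^ 2 = Module.finrank ℂ A := by
  rw [e.toLinearEquiv.finrank_eq, Module.finrank_pi_fintype]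
  simp [Module.finrank_matrix, sq]

variable [∀ i, NeZero (d i)]

/-- primitive idempotent -/
noncomputable def E0 (i : Fin n) : A := Eu e i 0 0

theorem E0_idem (i : Fin n) : IsIdempotentElem (E0 e i) := by
  simp [IsIdempotentElem, E0, Eu_mul]

theorem ch_E0 (i j : Fin n) : ch e j (E0 e i) = if i = j then 1 else 0 := by
  split_ifs with h
  · subst h; simp [E0, ch_Eu]
  · exact ch_Eu_ne e i j h _ _

theorem tr_expand (f : A →ₗ[ℂ] ℂ) (hf : ∀ x y, f (x * y) = f (y * x)) :
    f = ∑ i, f (E0 e i) • ch e i := by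
  apply fun_ext e
  intro i a b
  simp only [LinearMap.sum_apply, LinearMap.smul_apply]
  rw [Finset.sum_eq_single i]
  · have h1 : Eu e i a b = Eu e i a 0 * Eu e i 0 b := by simp [Eu_mul]
    rw [h1, hf, ← h1, Eu_mul, ch_Eu]
    split_ifs with h2 h3 h3
    · simp [E0]
    · exact absurd h2.symm h3
    · exact absurd h3.symm h2
    · simp
  · intro j _ hj
    simp [ch_Eu_ne e i j hj.symm]
  · simp

theorem ch_inj (i j : Fin n) (h : ch e i = ch e j) : i = j := by
  have := ch_E0 e i i
  rw [h, ch_E0] at this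
  by_contra hne
  simp [hne] at this

theorem coef_unique (a b : Fin n → ℂ) (h : ∑ i, a i • ch e i = ∑ i, b i • ch e i) : a = b := by
  ext j
  have := congrArg (fun f => f (E0 e j)) h
  simpa [ch_E0] using this

theorem trace_idem {m : Type*} [Fintype m] [DecidableEq m] (M : Matrix m m ℂ) (h : IsIdempotentElem M) :
    ∃ k : ℕ, M.trace = k := by
  have h1 : IsIdempotentElem (Matrix.toLin' M) := by
    unfold IsIdempotentElem
    rw [Module.End.mul_eq_comp, ← Matrix.toLin'_mul, h.eq]
  have h2 := (LinearMap.IsIdempotentElem.isProj_range _ h1).trace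
  rw [← Matrix.trace_toLin'_eq, h2]
  exact ⟨_, rfl⟩

theorem ch_idem (i : Fin n) (x : A) (hx : IsIdempotentElem x) : ∃ k : ℕ, ch e i x = k := by
  rw [ch_apply]
  apply trace_idem
  have := congrArg (fun y => e y i) hx.eq
  simpa [IsIdempotentElem] using this

theorem char_eq (φ : A →ₐ[ℂ] ℂ) : ∃ i, d i = 1 ∧ φ.toLinearMap = ch e i := by
  have h1 := tr_expand e φ.toLinearMap (fun x y => by simp [mul_comm])
  have h2 : ∀ i, φ (E0 e i) = 0 ∨ φ (E0 e i) = 1 := by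
    intro i
    have := congrArg φ (E0_idem e i).eq
    rw [map_mul] at this
    exact IsIdempotentElem.iff_eq_zero_or_one.mp this
  have h4 : ∀ i, ∃ k : ℕ, φ (E0 e i) = k := by
    intro i
    rcases h2 i with h | h
    · exact ⟨0, by simpa using h⟩
    · exact ⟨1, by simpa using h⟩
  choose k hk using h4
  have h3 := congrArg (fun f => f 1) h1
  simp only [LinearMap.sum_apply, LinearMap.smul_apply, ch_one, AlgHom.toLinearMap_apply, map_one, hk,
    smul_eq_mul] at h3
  have h5 : ∑ i, k i * d i = 1 := by exact_mod_cast h3.symm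
  have h6 : ∃ i, k i * d i ≠ 0 := by
    by_contra hcon
    push Not at hcon
    simp [hcon] at h5
  obtain ⟨i, hi⟩ := h6
  have h7 : k i * d i ≤ 1 := by
    rw [← h5]
    exact Finset.single_le_sum (f := fun i => k i * d i) (fun _ _ => Nat.zero_le _) (Finset.mem_univ i)
  have h8 : k i * d i = 1 := by omega
  have hki : k i = 1 := Nat.eq_one_of_mul_eq_one_right h8
  have hdi : d i = 1 := Nat.eq_one_of_mul_eq_one_left h8
  refine ⟨i, hdi, ?_⟩
  rw [h1, Finset.sum_eq_single i]
  · rw [AlgHom.toLinearMap_apply, hk, hki]; simp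
  · intro j _ hj
    have h9 : k j * d j = 0 := by
      have := Finset.sum_erase_add Finset.univ (fun i => k i * d i) (Finset.mem_univ i)
      simp only [h5, h8] at this
      have h10 : ∑ x ∈ Finset.univ.erase i, k x * d x = 0 := by omega
      exact (Finset.sum_eq_zero_iff.mp h10) j (by simp [hj])
    have := NeZero.ne (d j)
    have h11 : k j = 0 := by
      rcases Nat.mul_eq_zero.mp h9 with h | h
      · exact h
      · exact absurd h this
    rw [AlgHom.toLinearMap_apply, hk, h11]; simp
  · simp

theorem exists_char (i : Fin n) (hi : d i = 1) : ∃ φ : A →ₐ[ℂ] ℂ, φ.toLinearMap = ch e i := by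
  have h0 : ∀ a b : Fin (d i), a = b := by intro a b; ext; omega
  have : Unique (Fin (d i)) := ⟨⟨0⟩, fun a => h0 _ _⟩
  have h1 : ∀ x, ch e i x = mc e i 0 0 x := by
    intro x
    simp only [ch, LinearMap.sum_apply]
    rw [Fintype.sum_unique, h0 (@default _ this.toInhabited) 0]
  refine ⟨AlgHom.ofLinearMap (ch e i) (by rw [ch_one, hi]; simp) ?_, rfl⟩
  intro x y
  rw [h1, h1, h1, mc_mul, Fintype.sum_unique, h0 (@default _ this.toInhabited) 0]

theorem E0_mul (i : Fin n) (hi : d i = 1) (x : A) : x * E0 e i = ch e i x • E0 e i := by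
  have h0 : ∀ a b : Fin (d i), a = b := by intro a b; ext; omega
  have : Unique (Fin (d i)) := ⟨⟨0⟩, fun a => h0 _ _⟩
  apply mc_ext e
  intro j a b
  rw [map_smul]
  by_cases h : i = j
  · subst h
    rw [E0, mc_right, mc_Eu, h0 a 0, h0 b 0]
    simp only [ch, LinearMap.sum_apply]
    rw [Fintype.sum_unique, h0 (@default _ this.toInhabited) 0]
    simp
  · rw [E0, mc_right_ne e i j h, mc_Eu_ne e i j h]; simp

end
end SSHopf

namespace SSHopf
section
open TensorProduct Coalgebra WithConv HopfAlgebra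
variable {H : Type*} [Ring H] [HopfAlgebra ℂ H]
variable {n : ℕ} {d : Fin n → ℕ}
  (e : H ≃ₐ[ℂ] ((i : Fin n) → Matrix (Fin (d i)) (Fin (d i)) ℂ))

theorem pr_sum_left {ι : Type*} (s : Finset ι) (f : ι → H →ₗ[ℂ] ℂ) (g : H →ₗ[ℂ] ℂ)
    (x : H ⊗[ℂ] H) : pr (∑ i ∈ s, f i) g x = ∑ i ∈ s, pr (f i) g x := by
  induction x with
  | zero => simp
  | add a b ha hb => simp only [map_add, ha, hb, Finset.sum_add_distrib]
  | tmul a b => simp [Finset.sum_mul]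

theorem pr_sum_right {ι : Type*} (s : Finset ι) (f : ι → H →ₗ[ℂ] ℂ) (g : H →ₗ[ℂ] ℂ)
    (x : H ⊗[ℂ] H) : pr g (∑ i ∈ s, f i) x = ∑ i ∈ s, pr g (f i) x := by
  induction x with
  | zero => simp
  | add a b ha hb => simp only [map_add, ha, hb, Finset.sum_add_distrib]
  | tmul a b => simp [Finset.mul_sum]

theorem pr_move (f g f' g' : H →ₗ[ℂ] ℂ) (x : H ⊗[ℂ] H) (h : H) (hf : ∀ y, f' (h * y) = f y)
    (hg : ∀ y, g (y * h) = g' y) (hx : (h ⊗ₜ 1) * x = x * (1 ⊗ₜ h)) :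
    pr f g x = pr f' g' x := by
  have h1 : pr f g x = pr f' g ((h ⊗ₜ 1) * x) := by
    clear hx
    induction x with
    | zero => simp
    | add a b ha hb => simp only [map_add, ha, hb, mul_add]
    | tmul a b => simp [hf]
  have h2 : pr f' g (x * (1 ⊗ₜ h)) = pr f' g' x := by
    clear hx h1
    induction x with
    | zero => simp
    | add a b ha hb => simp only [map_add, ha, hb, add_mul]
    | tmul a b => simp [hg]
  rw [h1, hx, h2]

theorem orth [∀ i, NeZero (d i)] (L : H) (hL : ∀ x : H, x * L = counit (R := ℂ) x • L)
    (h1 : counit (R := ℂ) L = 1) (i j : Fin n) :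
    cv (ch e i) (ch e j ∘ₗ aS H) L = if i = j then 1 else 0 := by
  have ht := casimir L hL
  have hm : LinearMap.mul' ℂ H (TensorProduct.map LinearMap.id (aS H) (comul (R := ℂ) L)) = 1 := by
    have := mul_antipode_lTensor_comul_apply (R := ℂ) L
    rw [h1, map_one] at this
    exact this
  rw [cv, LinearMap.comp_apply, pr_S]
  generalize TensorProduct.map LinearMap.id (aS H) (comul (R := ℂ) L) = t at ht hm
  simp only [ch, pr_sum_left, pr_sum_right]
  split_ifs with h
  · subst h
    have h2 : ∀ b c : Fin (d i), pr (mc e i b b) (mc e i c c) t =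
        if c = b then pr (mc e i 0 b) (mc e i b 0) t else 0 := by
      intro b c
      by_cases hcb : c = b
      · rw [if_pos hcb]
        subst hcb
        exact pr_move _ _ _ _ t (Eu e i 0 c) (fun y => mc_left e i 0 c c y)
          (fun y => by rw [mc_right, if_pos rfl]) (ht _)
      · rw [if_neg hcb]
        rw [pr_move _ _ _ 0 t (Eu e i 0 b) (fun y => mc_left e i 0 b b y)
          (fun y => by rw [mc_right, if_neg hcb]; rfl) (ht _)]
        simp [pr]
    have h3 : ∀ x : H ⊗[ℂ] H, ∑ b, pr (mc e i 0 b) (mc e i b 0) x =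
        mc e i 0 0 (LinearMap.mul' ℂ H x) := by
      intro x
      induction x with
      | zero => simp
      | add a b ha hb => simp only [map_add, ← ha, ← hb, Finset.sum_add_distrib]
      | tmul a b => simp [mc_mul]
    simp only [h2, Finset.sum_ite_eq, Finset.mem_univ, if_true, h3, hm]
    simp [mc_apply]
  · apply Finset.sum_eq_zero
    intro c _
    apply Finset.sum_eq_zero
    intro b _
    rw [pr_move _ _ _ 0 t (Eu e i b b) (fun y => mc_left e i b b b y)
          (fun y => by rw [mc_right_ne e i j h]; rfl) (ht _)]
    simp [pr]

theorem pr_tr (f g : H →ₗ[ℂ] ℂ) (hf : ∀ x y, f (x * y) = f (y * x))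
    (hg : ∀ x y, g (x * y) = g (y * x)) (x y : H ⊗[ℂ] H) : pr f g (x * y) = pr f g (y * x) := by
  induction x with
  | zero => simp
  | add a b ha hb => simp only [map_add, ha, hb, add_mul, mul_add]
  | tmul a b =>
    induction y with
    | zero => simp
    | add a b ha hb => simp only [map_add, ha, hb, add_mul, mul_add]
    | tmul p q => simp [hf a p, hg b q]

theorem cv_tr (f g : H →ₗ[ℂ] ℂ) (hf : ∀ x y, f (x * y) = f (y * x))
    (hg : ∀ x y, g (x * y) = g (y * x)) (x y : H) : cv f g (x * y) = cv f g (y * x) := by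
  simp only [cv, LinearMap.comp_apply, Bialgebra.comul_mul]
  exact pr_tr f g hf hg _ _

/-- block representation -/
noncomputable def rh (i : Fin n) : H →ₐ[ℂ] Matrix (Fin (d i)) (Fin (d i)) ℂ :=
  (Pi.evalAlgHom ℂ (fun i => Matrix (Fin (d i)) (Fin (d i)) ℂ) i).comp e.toAlgHom

theorem rh_apply (i : Fin n) (x : H) : rh e i x = e x i := rfl

theorem pr_ch_idem (i j : Fin n) (x : H ⊗[ℂ] H) (hx : IsIdempotentElem x) :
    ∃ k : ℕ, pr (ch e i) (ch e j) x = k := by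
  have h1 : ∀ y : H ⊗[ℂ] H, pr (ch e i) (ch e j) y =
      (Matrix.kroneckerAlgEquiv (Fin (d i)) (Fin (d j)) ℂ
        (Algebra.TensorProduct.map (rh e i) (rh e j) y)).trace := by
    intro y
    induction y with
    | zero => simp
    | add a b ha hb => simp only [map_add, ha, hb, Matrix.trace_add]
    | tmul a b =>
      simp [ch_apply, rh_apply, Matrix.trace_kronecker]
  rw [h1]
  apply trace_idem
  exact (hx.map _).map _

theorem S_idem (x : H) (hx : IsIdempotentElem x) : IsIdempotentElem (aS H x) := by
  have := antipode_mul_antidistrib (R := ℂ) x x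
  rw [hx.eq] at this
  exact this.symm

end
end SSHopf

namespace SSHopf
section
open TensorProduct Coalgebra WithConv HopfAlgebra
variable {H : Type*} [Ring H] [HopfAlgebra ℂ H]
variable {n : ℕ} {d : Fin n → ℕ} [∀ i, NeZero (d i)]
  (e : H ≃ₐ[ℂ] ((i : Fin n) → Matrix (Fin (d i)) (Fin (d i)) ℂ))

/-- purely combinatorial: a ℕ-matrix factorisation of the identity -/
theorem nat_perm (c M : Fin n → Fin n → ℕ)
    (h : ∀ i j, ∑ k, c j k * M i k = if i = j then 1 else 0) :
    ∃ s : Fin n → Fin n, Function.Injective s ∧ (∀ j k, c j k = if s j = k then 1 else 0) ∧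
      ∀ i k, M i k = if s i = k then 1 else 0 := by
  have h1 : ∀ j, ∃ k, c j k = 1 ∧ M j k = 1 := by
    intro j
    have h2 := h j j
    rw [if_pos rfl] at h2
    have h6 : ∃ i, c j i * M j i ≠ 0 := by
      by_contra hcon
      push Not at hcon
      simp [hcon] at h2
    obtain ⟨k, hk⟩ := h6
    have h7 : c j k * M j k ≤ 1 := by
      rw [← h2]
      exact Finset.single_le_sum (f := fun i => c j i * M j i) (fun _ _ => Nat.zero_le _)
        (Finset.mem_univ k)
    have h8 : c j k * M j k = 1 := by omega
    exact ⟨k, Nat.eq_one_of_mul_eq_one_right h8, Nat.eq_one_of_mul_eq_one_left h8⟩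
  choose s hc hM using h1
  have h3 : ∀ i j, i ≠ j → ∀ k, c j k * M i k = 0 := by
    intro i j hij k
    have h2 := h i j
    rw [if_neg hij] at h2
    exact (Finset.sum_eq_zero_iff.mp h2) k (Finset.mem_univ k)
  have hs : Function.Injective s := by
    intro i j hij
    by_contra hne
    have := h3 i j hne (s i)
    rw [hM i, hij, hc j] at this
    omega
  have hsur : Function.Surjective s := Finite.surjective_of_injective hs
  refine ⟨s, hs, ?_, ?_⟩
  · intro j k
    split_ifs with hk
    · subst hk; exact hc j
    · obtain ⟨i, rfl⟩ := hsur k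
      have hij : i ≠ j := fun h => hk (by rw [h])
      have := h3 i j hij (s i)
      rw [hM i] at this
      omega
  · intro i k
    split_ifs with hk
    · subst hk; exact hM i
    · obtain ⟨j, rfl⟩ := hsur k
      have hij : i ≠ j := fun h => hk (by rw [h])
      have := h3 i j hij (s j)
      rw [hc j] at this
      omega

theorem S_tr (f : H →ₗ[ℂ] ℂ) (hf : ∀ x y, f (x * y) = f (y * x)) (x y : H) :
    (f ∘ₗ aS H) (x * y) = (f ∘ₗ aS H) (y * x) := by
  simp only [LinearMap.comp_apply, antipode_mul_antidistrib]
  exact hf _ _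

/-- existence of the duality permutation -/
theorem dual_data (z : Fin n) (hz1 : d z = 1) (hz : counit (R := ℂ) (A := H) = ch e z) :
    ∃ s : Fin n → Fin n, s z = z ∧ (∀ i, s (s i) = i) ∧ (∀ i, ch e i ∘ₗ aS H = ch e (s i)) ∧
      (∀ i j, cv (ch e i) (ch e j) (E0 e z) = if s i = j then 1 else 0) := by
  have hL : ∀ x : H, x * E0 e z = counit (R := ℂ) x • E0 e z := by
    intro x; rw [hz]; exact E0_mul e z hz1 x
  have hL1 : counit (R := ℂ) (E0 e z) = 1 := by rw [hz, ch_E0]; simp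
  have ho := orth e (E0 e z) hL hL1
  have h1 : ∀ i k, ∃ m : ℕ, (ch e i ∘ₗ aS H) (E0 e k) = m := by
    intro i k
    exact ch_idem e i _ (S_idem _ (E0_idem e k))
  choose c hc using h1
  have hcS : ∀ i, ch e i ∘ₗ aS H = ∑ k, (c i k : ℂ) • ch e k := by
    intro i
    have := tr_expand e (ch e i ∘ₗ aS H) (S_tr _ (ch_comm e i))
    rw [this]
    apply Finset.sum_congr rfl
    intro k _
    rw [hc]
  have h2 : ∀ i k, ∃ m : ℕ, cv (ch e i) (ch e k) (E0 e z) = m := by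
    intro i k
    refine pr_ch_idem e i k _ ?_
    have := (E0_idem e z).map (Bialgebra.comulAlgHom ℂ H)
    exact this
  choose M hM using h2
  obtain ⟨s, hs, hcs, hMs⟩ := nat_perm c M (by
    intro i j
    have h3 := ho i j
    rw [hcS, cv_sum_right] at h3
    simp only [cv_smul_right, LinearMap.sum_apply, LinearMap.smul_apply, hM, smul_eq_mul] at h3
    have h4 : ((∑ k, c j k * M i k : ℕ) : ℂ) = ((if i = j then 1 else 0 : ℕ) : ℂ) := by
      push_cast
      exact h3
    exact_mod_cast h4)
  have hchs : ∀ i, ch e i ∘ₗ aS H = ch e (s i) := by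
    intro i
    rw [hcS]
    simp [hcs]
  have hsz : s z = z := by
    apply ch_inj e
    rw [← hchs, ← hz]
    exact counit_comp_antipode
  have hτ : ∀ i, ch e i (aS H (E0 e z)) = ch e i (E0 e z) := by
    intro i
    have h3 : ch e i (aS H (E0 e z)) = ch e (s i) (E0 e z) := by rw [← hchs]; rfl
    rw [h3, ch_E0, ch_E0]
    by_cases h : z = i
    · subst h; simp [hsz]
    · rw [if_neg h, if_neg]
      intro h4
      exact h (hs (hsz.trans h4))
  refine ⟨s, hsz, ?_, hchs, ?_⟩
  · have h5 : ∀ i k, M i k = M (s k) (s i) := by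
      intro i k
      have h6 := tr_expand e (cv (ch e i) (ch e k)) (cv_tr _ _ (ch_comm e i) (ch_comm e k))
      have h7 : cv (ch e i) (ch e k) (aS H (E0 e z)) = cv (ch e i) (ch e k) (E0 e z) := by
        rw [h6]
        simp only [LinearMap.sum_apply, LinearMap.smul_apply, hτ]
      have h8 : cv (ch e i) (ch e k) (aS H (E0 e z)) = cv (ch e (s k)) (ch e (s i)) (E0 e z) := by
        rw [← hchs, ← hchs, ← cv_S]; rfl
      rw [h7, hM, hM] at h8
      exact_mod_cast h8
    intro i
    have h9 := h5 i (s i)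
    rw [hMs, hMs, if_pos rfl] at h9
    by_contra hne
    rw [if_neg] at h9
    · omega
    · intro h10
      exact hne (hs h10)
  · intro i j
    rw [hM, hMs]
    split_ifs <;> simp

/-- Part one: a semisimple Hopf algebra of small dimension has a nontrivial character -/
theorem part_one {K : Type*} [Ring K] [HopfAlgebra ℂ K] [FiniteDimensional ℂ K] [IsSemisimpleRing K]
    (h1 : 1 < Module.finrank ℂ K) (h60 : Module.finrank ℂ K < 60) :
    ∃ φ : K →ₐ[ℂ] ℂ, φ ≠ Bialgebra.counitAlgHom ℂ K := by
  by_contra hcon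
  push Not at hcon
  obtain ⟨n, d, hd, ⟨e⟩⟩ := IsSemisimpleRing.exists_algEquiv_pi_matrix_of_isAlgClosed ℂ K
  obtain ⟨z, hz1, hz⟩ := char_eq e (Bialgebra.counitAlgHom ℂ K)
  have hz' : counit (R := ℂ) (A := K) = ch e z := hz
  obtain ⟨s, hsz, hss, hchs, hτ⟩ := dual_data e z hz1 hz'
  have h2 : ∀ i j k, ∃ m : ℕ, cv (ch e i) (ch e j) (E0 e k) = m := by
    intro i j k
    refine pr_ch_idem e i j _ ?_
    exact (E0_idem e k).map (Bialgebra.comulAlgHom ℂ K)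
  choose N hN using h2
  have hexp : ∀ i j, cv (ch e i) (ch e j) = ∑ k, (N i j k : ℂ) • ch e k := by
    intro i j
    have := tr_expand e (cv (ch e i) (ch e j)) (cv_tr _ _ (ch_comm e i) (ch_comm e j))
    simpa only [hN] using this
  have h3 : ∀ i j m, cv (cv (ch e i) (ch e j)) (ch e m) (E0 e z) = N i j (s m) := by
    intro i j m
    rw [hexp, cv_sum_left]
    simp only [cv_smul_left, LinearMap.sum_apply, LinearMap.smul_apply, hτ]
    rw [Finset.sum_eq_single (s m)]
    · simp [hss]
    · intro k _ hk
      rw [if_neg]; · simp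
      intro h; exact hk (by rw [← h, hss])
    · simp
  have hτS : ∀ f : K →ₗ[ℂ] ℂ, (∀ x y, f (x * y) = f (y * x)) →
      f (aS K (E0 e z)) = f (E0 e z) := by
    intro f hf
    rw [tr_expand e f hf]
    simp only [LinearMap.sum_apply, LinearMap.smul_apply]
    apply Finset.sum_congr rfl
    intro i _
    have h3 : ch e i (aS K (E0 e z)) = ch e (s i) (E0 e z) := by rw [← hchs]; rfl
    rw [h3, ch_E0, ch_E0]
    by_cases h : z = i
    · subst h; simp [hsz]
    · rw [if_neg h, if_neg]
      intro h4
      exact h (by rw [← hsz, h4, hss])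
  have F : FD (Fin n) d N z s := by
    refine ⟨hz1, ?_, fun i => Nat.pos_of_ne_zero (NeZero.ne _), hss, ?_, ?_, ?_, ?_⟩
    · intro i hi
      obtain ⟨φ, hφ⟩ := exists_char e i hi
      apply ch_inj e
      rw [← hφ, hcon φ, hz]
    · intro i
      have h4 : ch e (s i) 1 = ch e i 1 := by
        rw [← hchs]; simp
      rw [ch_one, ch_one] at h4
      exact_mod_cast h4
    · intro i j
      have h4 := congrArg (fun f => f 1) (hexp i j)
      simp only [cv, LinearMap.comp_apply, Bialgebra.comul_one, LinearMap.sum_apply,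
        LinearMap.smul_apply, ch_one, Algebra.TensorProduct.one_def, pr_tmul, smul_eq_mul] at h4
      exact_mod_cast h4
    · intro i j k
      have h4 := h3 i j (s k)
      rw [hss] at h4
      have h5 := hτS (cv (cv (ch e i) (ch e j)) (ch e (s k)))
        (cv_tr _ _ (cv_tr _ _ (ch_comm e i) (ch_comm e j)) (ch_comm e _))
      have h6 : cv (cv (ch e i) (ch e j)) (ch e (s k)) (aS K (E0 e z)) = N k (s j) i := by
        have h7 := h3 k (s j) (s i)
        rw [hss] at h7
        rw [← h7, cv_assoc (ch e k)]
        have h8 : cv (ch e k) (cv (ch e (s j)) (ch e (s i))) =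
            cv (cv (ch e i) (ch e j)) (ch e (s k)) ∘ₗ aS K := by
          rw [cv_S, cv_S, hchs, hchs, hchs, hss]
        rw [h8]; rfl
      rw [h6, h4] at h5
      exact_mod_cast h5.symm
    · intro j k
      have h4 := hN z j k
      rw [← hz', counit_cv, ch_E0] at h4
      have h5 : ((N z j k : ℕ) : ℂ) = ((if j = k then 1 else 0 : ℕ) : ℂ) := by
        rw [← h4]; push_cast
        simp only [eq_comm]
      exact_mod_cast h5
  have hs := sum_sq e
  exact F.combi (by omega) (by omega)

end
end SSHopf

namespace SSHopf
section
open TensorProduct Coalgebra WithConv HopfAlgebra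
variable {H : Type*} [Ring H] [HopfAlgebra ℂ H]

/-- apply a functional on the right leg -/
noncomputable def idf (f : H →ₗ[ℂ] ℂ) : H ⊗[ℂ] H →ₗ[ℂ] H :=
  (TensorProduct.rid ℂ H).toLinearMap ∘ₗ TensorProduct.map LinearMap.id f
@[simp] theorem idf_tmul (f : H →ₗ[ℂ] ℂ) (x y : H) : idf f (x ⊗ₜ y) = f y • x := by simp [idf]

/-- apply a functional on the left leg -/
noncomputable def fid (f : H →ₗ[ℂ] ℂ) : H ⊗[ℂ] H →ₗ[ℂ] H :=
  (TensorProduct.lid ℂ H).toLinearMap ∘ₗ TensorProduct.map f LinearMap.id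
@[simp] theorem fid_tmul (f : H →ₗ[ℂ] ℂ) (x y : H) : fid f (x ⊗ₜ y) = f x • y := by simp [fid]

theorem pr_fid (f g : H →ₗ[ℂ] ℂ) (x : H ⊗[ℂ] H) : pr f g x = g (fid f x) := by
  induction x with
  | zero => simp
  | add a b ha hb => simp only [map_add, ha, hb]
  | tmul a b => simp

theorem pr_idf (f g : H →ₗ[ℂ] ℂ) (x : H ⊗[ℂ] H) : pr f g x = f (idf g x) := by
  induction x with
  | zero => simp
  | add a b ha hb => simp only [map_add, ha, hb]
  | tmul a b => simp [mul_comm]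

theorem sep {x y : H} (h : ∀ f : H →ₗ[ℂ] ℂ, f x = f y) : x = y := by
  rw [← sub_eq_zero, ← Module.forall_dual_apply_eq_zero_iff ℂ]
  intro f
  rw [map_sub, h, sub_self]

/-- antipode squared as a linear map -/
noncomputable def S2 (H : Type*) [Ring H] [HopfAlgebra ℂ H] : H →ₗ[ℂ] H := aS H ∘ₗ aS H

theorem S2_apply (x : H) : S2 H x = aS H (aS H x) := rfl
theorem S2_mul (x y : H) : S2 H (x * y) = S2 H x * S2 H y := by
  simp [S2_apply, antipode_mul_antidistrib]
theorem S2_one : S2 H 1 = 1 := by simp [S2_apply]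

theorem K3 (x : H) : ∑ i ∈ (ℛ ℂ x).index,
    ((1 : H) ⊗ₜ[ℂ] aS H ((ℛ ℂ x).right i)) * comul (R := ℂ) (S2 H ((ℛ ℂ x).left i)) =
    S2 H x ⊗ₜ 1 := by
  have h := congrArg (TensorProduct.map (S2 H) (aS H)) (K2 x)
  rw [map_sum] at h
  have key : ∀ (X : H ⊗[ℂ] H) (r : H), TensorProduct.map (S2 H) (aS H)
      (TensorProduct.map LinearMap.id (aS H) X * ((1 : H) ⊗ₜ[ℂ] r)) =
      ((1 : H) ⊗ₜ[ℂ] aS H r) * TensorProduct.map (S2 H) (S2 H) X := by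
    intro X r
    induction X with
    | zero => simp
    | add a b ha hb => simp only [add_mul, mul_add, map_add, ha, hb]
    | tmul a b => simp [antipode_mul_antidistrib, S2_apply]
  simp only [key] at h
  simp only [TensorProduct.map_tmul, antipode_one] at h
  rw [← h]
  apply Finset.sum_congr rfl
  intro i _
  rw [S2_apply, comul_SS]; rfl

/-- The trace functional -/
noncomputable def lam (H : Type*) [Ring H] [HopfAlgebra ℂ H] : H →ₗ[ℂ] ℂ :=
  LinearMap.trace ℂ H ∘ₗ (LinearMap.lcomp ℂ H (S2 H)) ∘ₗ (LinearMap.mul ℂ H).flip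

theorem lam_apply (h : H) : lam H h = LinearMap.trace ℂ H (LinearMap.mulRight ℂ h ∘ₗ S2 H) := rfl

theorem lam_one : lam H 1 = LinearMap.trace ℂ H (S2 H) := by
  rw [lam_apply]; simp

variable [FiniteDimensional ℂ H]

theorem lam_cyc (x y : H) : lam H (x * y) = lam H (S2 H y * x) := by
  rw [lam_apply, lam_apply, LinearMap.mulRight_mul, LinearMap.comp_assoc, LinearMap.trace_comp_comm']
  congr 1
  ext z
  simp [S2_mul, mul_assoc]

theorem lam_L (L : H) (hL : ∀ x : H, x * L = counit (R := ℂ) x • L)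
    (hL1 : counit (R := ℂ) L = 1) : lam H L = 1 := by
  have : LinearMap.mulRight ℂ L ∘ₗ S2 H = (counit (R := ℂ) (A := H)).smulRight L := by
    ext x
    simp [hL, S2_apply]
  rw [lam_apply, this, LinearMap.trace_smulRight, hL1]

theorem lam_int (f : H →ₗ[ℂ] ℂ) : cv (lam H) f = f 1 • lam H := by
  ext h
  set b := Module.finBasis ℂ H with hb
  let T : H →ₗ[ℂ] H := LinearMap.mulRight ℂ h ∘ₗ S2 H
  let A : Fin (Module.finrank ℂ H) → H →ₗ[ℂ] H := fun k => idf (b.coord k) ∘ₗ comul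
  let Bg : H → H →ₗ[ℂ] H := fun r => idf f ∘ₗ LinearMap.mulLeft ℂ ((1 : H) ⊗ₜ[ℂ] aS H r) ∘ₗ comul
  have hBadd : ∀ r y, Bg r y = idf f (((1 : H) ⊗ₜ[ℂ] aS H r) * comul (R := ℂ) y) := fun _ _ => rfl
  have hBlin : ∀ r y, ∑ k, b.coord k r • Bg (b k) y = Bg r y := by
    intro r y
    have : r = ∑ k, b.coord k r • b k := by simp
    conv_rhs => rw [this]
    simp only [hBadd, map_sum, map_smul, TensorProduct.tmul_sum, TensorProduct.tmul_smul, Finset.sum_mul, smul_mul_assoc]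
  have h1 : ∑ k, Bg (b k) ∘ₗ T ∘ₗ A k = LinearMap.mulRight ℂ (idf f (comul (R := ℂ) h)) ∘ₗ S2 H := by
    ext x
    simp only [LinearMap.sum_apply, LinearMap.comp_apply, A]
    have h2 : ∀ k, Bg (b k) (T (idf (b.coord k) (comul (R := ℂ) x))) =
        ∑ i ∈ (ℛ ℂ x).index, b.coord k ((ℛ ℂ x).right i) • Bg (b k) (T ((ℛ ℂ x).left i)) := by
      intro k
      conv_lhs => rw [← (ℛ ℂ x).eq]
      simp only [map_sum, idf_tmul, map_smul]
    simp only [h2]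
    rw [Finset.sum_comm]
    simp only [hBlin]
    simp only [hBadd]
    have h3 : ∀ i, idf f (((1 : H) ⊗ₜ[ℂ] aS H ((ℛ ℂ x).right i)) * comul (R := ℂ) (T ((ℛ ℂ x).left i))) =
      idf f ((((1 : H) ⊗ₜ[ℂ] aS H ((ℛ ℂ x).right i)) * comul (R := ℂ) (S2 H ((ℛ ℂ x).left i))) * comul (R := ℂ) h) := by
      intro i
      simp [T, mul_assoc]
    simp only [h3]
    rw [← map_sum, ← Finset.sum_mul, K3]
    have h4 : ∀ Y : H ⊗[ℂ] H, idf f ((S2 H x ⊗ₜ 1) * Y) = S2 H x * idf f Y := by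
      intro Y
      induction Y with
      | zero => simp
      | add a b ha hb => simp only [mul_add, map_add, ha, hb]
      | tmul a b => simp
    rw [h4]; rfl
  have h5 : ∑ k, A k ∘ₗ Bg (b k) = f 1 • LinearMap.id := by
    ext y
    simp only [LinearMap.sum_apply, LinearMap.comp_apply, A, hBadd]
    have h6 : ∀ k, idf (b.coord k) (comul (R := ℂ) (idf f (((1 : H) ⊗ₜ[ℂ] aS H (b k)) * comul (R := ℂ) y))) =
        ∑ j ∈ (ℛ ℂ y).index, f (aS H (b k) * (ℛ ℂ y).right j) • idf (b.coord k) (comul (R := ℂ) ((ℛ ℂ y).left j)) := by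
      intro k
      conv_lhs => rw [← (ℛ ℂ y).eq]
      simp [Finset.mul_sum]
    simp only [h6]
    rw [Finset.sum_comm]
    have h7 : ∀ (X : H ⊗[ℂ] H) (r : H), ∑ k, f (aS H (b k) * r) • idf (b.coord k) X =
        idf f (TensorProduct.map LinearMap.id (aS H) X * ((1 : H) ⊗ₜ[ℂ] r)) := by
      intro X r
      induction X with
      | zero => simp
      | add a b ha hb => simp only [add_mul, map_add, smul_add, Finset.sum_add_distrib, ha, hb]
      | tmul p q =>
        have : q = ∑ k, b.coord k q • b k := by simp
        conv_rhs => rw [this]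
        simp only [TensorProduct.map_tmul, LinearMap.id_apply, Algebra.TensorProduct.tmul_mul_tmul,
          mul_one, idf_tmul, map_sum, map_smul, Finset.sum_mul, smul_mul_assoc, Finset.sum_smul,
          smul_smul, smul_eq_mul]
        exact Finset.sum_congr rfl fun k _ => by rw [mul_comm]
    simp only [h7]
    rw [← map_sum, K2]
    simp
  have h8 : cv (lam H) f h = lam H (idf f (comul (R := ℂ) h)) := pr_idf _ _ _
  rw [h8, lam_apply, ← h1, map_sum]
  have h9 : ∀ k, LinearMap.trace ℂ H (Bg (b k) ∘ₗ T ∘ₗ A k) = LinearMap.trace ℂ H (T ∘ₗ (A k ∘ₗ Bg (b k))) := by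
    intro k
    rw [LinearMap.trace_comp_comm', LinearMap.comp_assoc]
  simp only [h9]
  have h10 : ∑ k, T ∘ₗ (A k ∘ₗ Bg (b k)) = T ∘ₗ ∑ k, A k ∘ₗ Bg (b k) := by
    ext x; simp
  rw [← map_sum, h10, h5, LinearMap.comp_smul, LinearMap.comp_id, map_smul, LinearMap.smul_apply,
    lam_apply]

theorem star (ν : H →ₗ[ℂ] ℂ) (hν : ∀ f, cv ν f = f 1 • ν) (L : H)
    (hL' : ∀ x : H, L * x = counit (R := ℂ) x • L) (h : H) :
    fid (ν ∘ₗ LinearMap.mulRight ℂ h) (comul (R := ℂ) L) = ν L • aS H h := by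
  have h1 : fid (ν ∘ₗ LinearMap.mulRight ℂ h) (comul (R := ℂ) L) = fid ν (comul (R := ℂ) L * (h ⊗ₜ 1)) := by
    generalize comul (R := ℂ) L = Y
    induction Y with
    | zero => simp
    | add a b ha hb => simp only [add_mul, map_add, ha, hb]
    | tmul a b => simp
  have h2 : ∀ (Y : H ⊗[ℂ] H) (s : H), fid ν (Y * (1 ⊗ₜ s)) = fid ν Y * s := by
    intro Y s
    induction Y with
    | zero => simp
    | add a b ha hb => simp only [add_mul, map_add, ha, hb]
    | tmul a b => simp
  have h3 : fid ν (comul (R := ℂ) L) = ν L • 1 := by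
    apply sep
    intro f
    rw [← pr_fid]
    have := congrArg (fun F => F L) (hν f)
    simpa [cv, mul_comm] using this
  rw [h1, ← K1 h, Finset.mul_sum, map_sum]
  simp only [← mul_assoc, ← Bialgebra.comul_mul, h2, hL', map_smul, h3, smul_mul_assoc, one_mul]
  conv_rhs => rw [← Coalgebra.sum_counit_smul (R := ℂ) (ℛ ℂ h)]
  rw [map_sum, Finset.smul_sum]
  apply Finset.sum_congr rfl
  intro i _
  rw [map_smul, smul_comm]
end
end SSHopf

namespace SSHopf
section
open TensorProduct Coalgebra WithConv HopfAlgebra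
variable {H : Type*} [Ring H] [HopfAlgebra ℂ H] [FiniteDimensional ℂ H]

theorem sep2 {x y : H ⊗[ℂ] H} (h : ∀ f g : H →ₗ[ℂ] ℂ, pr f g x = pr f g y) : x = y := by
  set b := Module.finBasis ℂ H
  apply (b.tensorProduct b).repr.injective
  ext ⟨i, j⟩
  have h1 : ∀ t : H ⊗[ℂ] H, (b.tensorProduct b).repr t (i, j) = pr (b.coord i) (b.coord j) t := by
    intro t
    induction t with
    | zero => simp
    | add a b ha hb => simp only [map_add, Finsupp.add_apply, ha, hb]
    | tmul a c => simp [Module.Basis.tensorProduct_repr_tmul_apply, mul_comm]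
  rw [h1, h1, h]

theorem radford (L : H) (hL : ∀ x : H, x * L = counit (R := ℂ) x • L)
    (hL' : ∀ x : H, L * x = counit (R := ℂ) x • L)
    (hL1 : counit (R := ℂ) L = 1) (hS : Function.Bijective (aS H)) :
    ∃ g : H, IsGroupLikeElem ℂ g ∧ ∀ x, g * x = S2 H (S2 H x) * g := by
  have hlL := lam_L L hL hL1
  have hst := star (lam H) lam_int L hL'
  -- the map J
  let J : (H →ₗ[ℂ] ℂ) →ₗ[ℂ] H :=
    { toFun := fun ψ => fid ψ (comul (R := ℂ) L)
      map_add' := by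
        intro a b
        generalize comul (R := ℂ) L = Y
        induction Y with
        | zero => simp
        | add p q hp hq => simp only [map_add, hp, hq]; abel
        | tmul p q => simp [add_smul]
      map_smul' := by
        intro a b
        generalize comul (R := ℂ) L = Y
        induction Y with
        | zero => simp
        | add p q hp hq => simp only [map_add, hp, hq, smul_add]
        | tmul p q => simp [smul_smul] }
  have hJ : ∀ ψ, J ψ = fid ψ (comul (R := ℂ) L) := fun _ => rfl
  have hJs : Function.Surjective J := by
    intro y
    obtain ⟨h, rfl⟩ := hS.2 y
    refine ⟨lam H ∘ₗ LinearMap.mulRight ℂ h, ?_⟩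
    rw [hJ, hst, hlL, one_smul]
  have hJi : Function.Injective J := by
    rw [LinearMap.injective_iff_surjective_of_finrank_eq_finrank]
    · exact hJs
    · exact Subspace.dual_finrank_eq
  have hint : ∀ ν : H →ₗ[ℂ] ℂ, (∀ f, cv ν f = f 1 • ν) → ν = ν L • lam H := by
    intro ν hν
    apply hJi
    rw [map_smul]
    have h1 : ∀ ν : H →ₗ[ℂ] ℂ, (∀ f, cv ν f = f 1 • ν) → J ν = ν L • 1 := by
      intro ν hν
      have h2 := star ν hν L hL' 1
      rw [hJ]
      simpa using h2
    rw [h1 ν hν, h1 _ lam_int, hlL, one_smul]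
  have hl0 : lam H ≠ 0 := by
    intro h; rw [h] at hlL; simp at hlL
  set g : H := idf (lam H) (comul (R := ℂ) L) with hg
  have hgl : ∀ f : H →ₗ[ℂ] ℂ, cv f (lam H) = f g • lam H := by
    intro f
    have h1 := hint (cv f (lam H)) (by
      intro k
      rw [cv_assoc, lam_int, cv_smul_right])
    rw [h1]
    congr 1
    exact pr_idf _ _ _
  have hgrp : IsGroupLikeElem ℂ g := by
    refine ⟨?_, ?_⟩
    · have h1 := hgl counit
      rw [counit_cv] at h1
      have h2 := congrArg (fun F => F L) h1
      simp only [LinearMap.smul_apply, hlL] at h2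
      simpa using h2.symm
    · apply sep2
      intro f k
      have h1 := hgl (cv f k)
      rw [cv_assoc, hgl, cv_smul_right, hgl] at h1
      have h2 := congrArg (fun F => F L) h1
      simp only [LinearMap.smul_apply, hlL] at h2
      rw [pr_tmul]
      have h3 : pr f k (comul (R := ℂ) g) = cv f k g := rfl
      rw [h3]
      simpa [mul_comm] using h2.symm
  have hgS : g * aS H g = 1 := hgrp.mul_antipode_cancel
  have hgS' : aS H g * g = 1 := hgrp.antipode_mul_cancel
  -- S L = L
  have hSL : aS H L = L := by
    have h1 : L * aS H L = L := by rw [hL', counit_antipode, hL1, one_smul]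
    obtain ⟨y, hy⟩ := hS.2 L
    have h2 : L * aS H L = aS H L := by
      conv_lhs => rw [← hy]
      rw [hy]
      nth_rewrite 1 [← hy]
      rw [← antipode_mul_antidistrib, hL', map_smul]
      have : counit (R := ℂ) y = 1 := by rw [← counit_antipode (R := ℂ) y, hy, hL1]
      rw [this, one_smul]
    rw [← h2, h1]
  set ν : H →ₗ[ℂ] ℂ := lam H ∘ₗ LinearMap.mulRight ℂ g with hν
  have hνint : ∀ f, cv f ν = f 1 • ν := by
    intro f
    ext h
    have h1 := congrArg (fun F => F (h * g)) (hgl (f ∘ₗ LinearMap.mulRight ℂ (aS H g)))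
    simp only [LinearMap.smul_apply, LinearMap.comp_apply, LinearMap.mulRight_apply, hgS] at h1
    rw [LinearMap.smul_apply, hν, LinearMap.comp_apply, LinearMap.mulRight_apply, ← h1]
    simp only [cv, LinearMap.comp_apply, Bialgebra.comul_mul, hgrp.comul_eq_tmul_self]
    generalize comul (R := ℂ) h = Y
    induction Y with
    | zero => simp
    | add p q hp hq => simp only [map_add, add_mul, hp, hq]
    | tmul p q => simp [mul_assoc, hgS]
  have hνS : ν ∘ₗ aS H = lam H := by
    have h1 := hint (ν ∘ₗ aS H) (by
      intro f
      let Se : H ≃ₗ[ℂ] H := LinearEquiv.ofBijective (aS H) hS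
      have hSe : f = (f ∘ₗ Se.symm.toLinearMap) ∘ₗ aS H := by
        ext x
        have : Se.symm (Se x) = x := Se.symm_apply_apply x
        simp only [LinearMap.comp_apply]
        exact congrArg f this.symm
      have h2 : (f ∘ₗ Se.symm.toLinearMap) 1 = f 1 := by
        conv_rhs => rw [hSe]
        simp
      conv_lhs => rw [hSe]
      rw [← cv_S, hνint, h2]; rfl)
    rw [h1]
    have : (ν ∘ₗ aS H) L = 1 := by
      simp only [LinearMap.comp_apply, hSL, hν, LinearMap.mulRight_apply]
      rw [hL', map_smul, hlL, hgrp.counit_eq_one]; simp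
    rw [this, one_smul]
  have hA : ∀ h, lam H (aS H h) = lam H (g * h) := by
    intro h
    have h1 := congrArg (fun F => F (g * h)) hνS
    simp only [LinearMap.comp_apply, hν, LinearMap.mulRight_apply] at h1
    rw [antipode_mul_antidistrib, mul_assoc, hgS', mul_one] at h1
    exact h1
  have hnd : ∀ a b : H, (∀ y, lam H (a * y) = lam H (b * y)) → a = b := by
    intro a b hab
    have h1 : ∀ x, lam H (x * a) = lam H (x * b) := by
      intro x
      have hS2 : Function.Surjective (S2 H) := hS.2.comp hS.2
      obtain ⟨y, rfl⟩ := hS2 x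
      rw [← lam_cyc, ← lam_cyc, hab]
    have h2 : lam H ∘ₗ LinearMap.mulRight ℂ a = lam H ∘ₗ LinearMap.mulRight ℂ b := by
      ext x; exact h1 x
    have h3 := hst a
    rw [h2, hst, hlL, one_smul, one_smul] at h3
    exact hS.1 h3.symm
  refine ⟨g, hgrp, fun x => hnd _ _ fun y => ?_⟩
  have h1 : lam H (aS H (x * y)) = lam H (g * x * y) := by rw [hA, mul_assoc]
  have h2 : lam H (aS H (x * y)) = lam H (S2 H (S2 H x) * g * y) := by
    rw [antipode_mul_antidistrib, lam_cyc]
    have : S2 H (aS H x) * aS H y = aS H (y * S2 H x) := by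
      rw [antipode_mul_antidistrib]; rfl
    rw [this, hA, ← mul_assoc, lam_cyc, mul_assoc]
  rw [← h1, h2]

theorem S2_finite (L : H) (hL : ∀ x : H, x * L = counit (R := ℂ) x • L)
    (hL' : ∀ x : H, L * x = counit (R := ℂ) x • L)
    (hL1 : counit (R := ℂ) L = 1) (hS : Function.Bijective (aS H)) :
    ∃ m : ℕ, 0 < m ∧ ∀ x, (S2 H)^[m] x = x := by
  obtain ⟨g, hg, hgx⟩ := radford L hL hL' hL1 hS
  have hfin : Finite (GroupLike ℂ H) := by
    have h1 := linearIndep_groupLikeVal (R := ℂ) (A := H)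
    exact h1.finite
  let G : GroupLike ℂ H := ⟨g, hg⟩
  obtain ⟨m, hm, hGm⟩ := (isOfFinOrder_of_finite G).exists_pow_eq_one
  have hgm : g ^ m = 1 := by
    have := congrArg GroupLike.val hGm
    simpa [G] using this
  refine ⟨2 * m, by omega, fun x => ?_⟩
  have h2 : ∀ k : ℕ, ∀ x, g ^ k * x = (S2 H)^[2 * k] x * g ^ k := by
    intro k
    induction k with
    | zero => intro x; simp
    | succ k ih =>
      intro x
      rw [pow_succ, mul_assoc, hgx, ← mul_assoc, ih, mul_assoc, ← pow_succ]
      congr 1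
  have := h2 m x
  rw [hgm] at this
  simpa using this.symm
end
end SSHopf

namespace SSHopf
section
open Matrix ComplexOrder

theorem trace_finite_order {N : ℕ} (u v : Matrix (Fin N) (Fin N) ℂ) (huv : u * v = 1)
    (m : ℕ) (hm : 0 < m) (hu : u ^ m = 1) : v.trace = Star.star (u.trace) := by
  set P : Matrix (Fin N) (Fin N) ℂ := ∑ k ∈ Finset.range m, (u ^ k)ᴴ * u ^ k with hP
  have hvu : v * u = 1 := mul_eq_one_comm.mp huv
  have hPd : P.PosDef := by
    apply Matrix.posDef_sum
    · exact ⟨0, Finset.mem_range.mpr hm⟩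
    · intro k _
      apply Matrix.PosDef.conjTranspose_mul_self
      have h1 : v ^ k * u ^ k = 1 := by
        have hc : Commute v u := by rw [Commute, SemiconjBy, huv, hvu]
        rw [← hc.mul_pow, hvu, one_pow]
      intro x y hxy
      have := congrArg (fun w => (v ^ k) *ᵥ w) hxy
      simpa [Matrix.mulVec_mulVec, h1] using this
  have hinv : uᴴ * P * u = P := by
    have h1 : uᴴ * P * u = ∑ k ∈ Finset.range m, (u ^ (k + 1))ᴴ * u ^ (k + 1) := by
      rw [hP, Finset.mul_sum, Finset.sum_mul]
      apply Finset.sum_congr rfl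
      intro k _
      rw [pow_succ, Matrix.conjTranspose_mul]
      simp only [mul_assoc]
    have h2 := Finset.sum_range_succ (fun k => (u ^ k)ᴴ * u ^ k) m
    have h3 := Finset.sum_range_succ' (fun k => (u ^ k)ᴴ * u ^ k) m
    rw [h1]
    rw [h2, hu] at h3
    simp only [pow_zero] at h3
    exact (add_right_cancel h3).symm
  have hPu : P * P⁻¹ = 1 := by
    apply Matrix.mul_nonsing_inv
    exact (Matrix.isUnit_iff_isUnit_det _).mp hPd.isUnit
  have h4 : uᴴ * P = P * v := by
    calc uᴴ * P = uᴴ * P * (u * v) := by rw [huv, mul_one]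
      _ = uᴴ * P * u * v := by simp only [mul_assoc]
      _ = P * v := by rw [hinv]
  have h5 : uᴴ = P * v * P⁻¹ := by rw [← h4, mul_assoc, hPu, mul_one]
  rw [← Matrix.trace_conjTranspose, h5, Matrix.trace_mul_comm, ← mul_assoc,
    mul_eq_one_comm.mp hPu, one_mul]

theorem block_trace {N : ℕ} [NeZero N] (σ : Matrix (Fin N) (Fin N) ℂ ≃ₐ[ℂ] Matrix (Fin N) (Fin N) ℂ)
    (m : ℕ) (hm : 0 < m) (hσ : ∀ x, σ^[m] x = x) :
    ∃ r : ℝ, 0 ≤ r ∧ ∑ a, ∑ b, σ (Matrix.single a b 1) a b = (r : ℂ) := by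
  -- inner
  have hin : ∃ u v : Matrix (Fin N) (Fin N) ℂ, u * v = 1 ∧ ∀ x, σ x = u * x * v := by
    let τ : Matrix (Fin N) (Fin N) ℂ ≃ₐ[ℂ] Module.End ℂ (Fin N → ℂ) := Matrix.toLinAlgEquiv'
    obtain ⟨T, hT⟩ := ((τ.symm.trans σ).trans τ).eq_linearEquivConjAlgEquiv
    refine ⟨τ.symm T.toLinearMap, τ.symm T.symm.toLinearMap, ?_, ?_⟩
    · rw [← map_mul]
      have : (T.toLinearMap * T.symm.toLinearMap : Module.End ℂ (Fin N → ℂ)) = 1 := by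
        ext; simp
      rw [this, map_one]
    · intro x
      have h1 := congrArg (fun F => F (τ x)) hT
      apply τ.injective
      simp only [map_mul, AlgEquiv.apply_symm_apply]
      simp only [AlgEquiv.trans_apply, AlgEquiv.symm_apply_apply] at h1
      rw [h1, LinearEquiv.conjAlgEquiv_apply]
      rfl
  obtain ⟨u, v, huv, hu⟩ := hin
  have hvu : v * u = 1 := mul_eq_one_comm.mp huv
  have hc : Commute u v := by rw [Commute, SemiconjBy, huv, hvu]
  have hpow : ∀ k x, σ^[k] x = u ^ k * x * v ^ k := by
    intro k
    induction k with
    | zero => intro x; simp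
    | succ k ih =>
      intro x
      rw [Function.iterate_succ_apply', ih, hu, pow_succ', pow_succ]
      simp only [mul_assoc]
  have huvk : ∀ k, v ^ k * u ^ k = 1 := by
    intro k
    rw [← hc.symm.mul_pow, hvu, one_pow]
  have hcomm : ∀ x, u ^ m * x = x * u ^ m := by
    intro x
    have h1 := hpow m x
    rw [hσ] at h1
    conv_rhs => rw [h1, mul_assoc, huvk, mul_one]
  obtain ⟨c, hcc⟩ := Matrix.mem_range_scalar_of_commute_single (M := u ^ m) (fun i j _ => (hcomm _).symm)
  have hc0 : c ≠ 0 := by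
    rintro rfl
    have h1 := huvk m
    rw [← hcc] at h1
    simp at h1
  obtain ⟨t, ht⟩ := IsAlgClosed.exists_pow_nat_eq c⁻¹ hm
  have ht0 : t ≠ 0 := by
    rintro rfl
    rw [zero_pow hm.ne'] at ht
    exact hc0 (inv_eq_zero.mp ht.symm)
  have hu' : (t • u) ^ m = 1 := by
    rw [smul_pow, ht, ← hcc, Matrix.scalar_apply, Matrix.smul_eq_diagonal_mul, Matrix.diagonal_mul_diagonal]
    simp [hc0]
  have huv' : (t • u) * (t⁻¹ • v) = 1 := by
    rw [smul_mul_smul_comm, mul_inv_cancel₀ ht0, huv, one_smul]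
  have htr := trace_finite_order _ _ huv' m hm hu'
  have hsum : ∑ a, ∑ b, σ (Matrix.single a b 1) a b = (t • u).trace * (t⁻¹ • v).trace := by
    rw [Matrix.trace_smul, Matrix.trace_smul, smul_mul_smul_comm, mul_inv_cancel₀ ht0, one_smul]
    simp only [Matrix.trace, Finset.sum_mul_sum]
    apply Finset.sum_congr rfl; intro a _
    apply Finset.sum_congr rfl; intro b _
    rw [hu]
    simp [Matrix.mul_apply, Matrix.single_apply, Finset.sum_mul, ite_and]
  refine ⟨Complex.normSq (t • u).trace, Complex.normSq_nonneg _, ?_⟩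
  rw [hsum, htr]
  exact Complex.mul_conj _
end
end SSHopf

namespace SSHopf
section
open TensorProduct Coalgebra WithConv HopfAlgebra
variable {A : Type*} [Ring A] [Algebra ℂ A]
variable {n : ℕ} {d : Fin n → ℕ}
  (e : A ≃ₐ[ℂ] ((i : Fin n) → Matrix (Fin (d i)) (Fin (d i)) ℂ))

theorem mc_of_ch (i : Fin n) (a b : Fin (d i)) (x : A) : mc e i a b x = ch e i (x * Eu e i b a) := by
  simp only [ch, LinearMap.sum_apply, mc_right]
  simp

theorem E0_mul_left [∀ i, NeZero (d i)] (i : Fin n) (hi : d i = 1) (x : A) :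
    E0 e i * x = ch e i x • E0 e i := by
  have h1 : ∀ y, E0 e i * y = E0 e i * y * E0 e i := by
    intro y
    apply mc_ext e
    intro j a b
    have h0 : ∀ a b : Fin (d i), a = b := by intro a b; ext; omega
    by_cases h : i = j
    · subst h
      rw [E0, mc_right, h0 b 0, h0 a 0]
      simp
    · have : mc e j a b (E0 e i * y * E0 e i) = 0 := mc_right_ne e i j h _ _ _ _ _
      rw [this, mc_mul]
      apply Finset.sum_eq_zero
      intro c _
      rw [E0, mc_Eu_ne e i j h]; simp
  rw [h1, mul_assoc, E0_mul e i hi, mul_smul_comm, (E0_idem e i).eq]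

theorem trace_expand [FiniteDimensional ℂ A] (σ : A →ₗ[ℂ] A) :
    LinearMap.trace ℂ A σ = ∑ i, ∑ a, ∑ b, mc e i a b (σ (Eu e i a b)) := by
  have h1 : σ = ∑ i, ∑ a, ∑ b, (mc e i a b).smulRight (σ (Eu e i a b)) := by
    apply fun_ext e
    intro j a b
    simp only [LinearMap.sum_apply, LinearMap.smulRight_apply]
    rw [Finset.sum_eq_single j]
    · rw [Finset.sum_eq_single a]
      · rw [Finset.sum_eq_single b]
        · simp [mc_Eu]
        · intro c _ hc; simp [mc_Eu, hc]
        · simp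
      · intro c _ hc
        apply Finset.sum_eq_zero
        intro c' _
        simp [mc_Eu, hc]
      · simp
    · intro k _ hk
      apply Finset.sum_eq_zero; intro c _
      apply Finset.sum_eq_zero; intro c' _
      rw [mc_Eu_ne e j k hk.symm, zero_smul]
    · simp
  conv_lhs => rw [h1]
  simp only [map_sum, LinearMap.trace_smulRight]

/-- positivity of the trace of a finite order automorphism fixing all characters -/
theorem trace_pos [FiniteDimensional ℂ A] [∀ i, NeZero (d i)] (σ : A →ₗ[ℂ] A)
    (hmul : ∀ x y, σ (x * y) = σ x * σ y) (hone : σ 1 = 1)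
    (hch : ∀ i x, ch e i (σ x) = ch e i x) (m : ℕ) (hm : 0 < m) (hσ : ∀ x, σ^[m] x = x)
    (z : Fin n) (hz : d z = 1) : LinearMap.trace ℂ A σ ≠ 0 := by
  have hsurj : Function.Surjective σ := by
    intro x
    refine ⟨σ^[m-1] x, ?_⟩
    rw [← Function.iterate_succ_apply' σ, Nat.succ_eq_add_one, Nat.sub_add_cancel hm, hσ]
  have hker : ∀ i x, e x i = 0 → e (σ x) i = 0 := by
    intro i x hx
    ext a b
    have h1 := mc_of_ch e i a b (σ x)
    obtain ⟨y, hy⟩ := hsurj (Eu e i b a)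
    rw [← hy, ← hmul, hch, ch_apply, map_mul, Pi.mul_apply, hx, zero_mul] at h1
    simpa [mc_apply] using h1
  have hsur : ∀ i M, ∃ x, e x i = M := by
    intro i M
    exact ⟨e.symm (Pi.single i M), by simp⟩
  have hblk : ∀ i, ∃ τ : Matrix (Fin (d i)) (Fin (d i)) ℂ ≃ₐ[ℂ] Matrix (Fin (d i)) (Fin (d i)) ℂ,
      ∀ x, e (σ x) i = τ (e x i) := by
    intro i
    let τ₀ : Matrix (Fin (d i)) (Fin (d i)) ℂ →ₗ[ℂ] Matrix (Fin (d i)) (Fin (d i)) ℂ :=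
      { toFun := fun M => e (σ (e.symm (Pi.single i M))) i
        map_add' := by intro M N; simp [Pi.single_add]
        map_smul' := by intro c M; simp [Pi.single_smul] }
    have hτ₀ : ∀ x, e (σ x) i = τ₀ (e x i) := by
      intro x
      have h1 := hker i (x - e.symm (Pi.single i (e x i))) (by simp)
      rw [map_sub, map_sub, Pi.sub_apply, sub_eq_zero] at h1
      exact h1
    let τ₁ : Matrix (Fin (d i)) (Fin (d i)) ℂ →ₐ[ℂ] Matrix (Fin (d i)) (Fin (d i)) ℂ :=
      AlgHom.ofLinearMap τ₀ (by
        have := hτ₀ 1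
        rw [hone, map_one] at this
        exact this.symm) (by
        intro M N
        obtain ⟨x, rfl⟩ := hsur i M
        obtain ⟨y, rfl⟩ := hsur i N
        rw [← hτ₀, ← hτ₀, ← Pi.mul_apply, ← map_mul, ← hτ₀, hmul, map_mul, Pi.mul_apply])
    have hs1 : Function.Surjective τ₁ := by
      intro M
      obtain ⟨x, rfl⟩ := hsur i M
      obtain ⟨y, rfl⟩ := hsurj x
      exact ⟨e y i, (hτ₀ y).symm⟩
    have hi1 : Function.Injective τ₁ := (LinearMap.injective_iff_surjective (f := τ₁.toLinearMap)).mpr hs1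
    exact ⟨AlgEquiv.ofBijective τ₁ ⟨hi1, hs1⟩, hτ₀⟩
  choose τ hτ using hblk
  have hit : ∀ i k x, e (σ^[k] x) i = (τ i)^[k] (e x i) := by
    intro i k
    induction k with
    | zero => intro x; simp
    | succ k ih => intro x; rw [Function.iterate_succ_apply', hτ, ih, Function.iterate_succ_apply']
  have hr : ∀ i, ∃ r : ℝ, 0 ≤ r ∧ ∑ a, ∑ b, (τ i) (Matrix.single a b 1) a b = (r : ℂ) := by
    intro i
    apply block_trace (τ i) m hm
    intro M
    obtain ⟨x, rfl⟩ := hsur i M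
    rw [← hit, hσ]
  choose r hr0 hr using hr
  have htr : LinearMap.trace ℂ A σ = ((∑ i, r i : ℝ) : ℂ) := by
    rw [trace_expand e, Complex.ofReal_sum]
    apply Finset.sum_congr rfl
    intro i _
    rw [← hr]
    apply Finset.sum_congr rfl; intro a _
    apply Finset.sum_congr rfl; intro b _
    rw [mc_apply, hτ]
    simp [Eu]
  have hrz : r z = 1 := by
    have h0 : ∀ a b : Fin (d z), a = b := by intro a b; ext; omega
    have hU : Unique (Fin (d z)) := ⟨⟨0⟩, fun a => h0 _ _⟩
    have h1 := hr z
    have h2 : ∀ a b : Fin (d z), Matrix.single a b (1 : ℂ) = 1 := by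
      intro a b
      ext c c'
      rw [h0 c a, h0 c' a, h0 b a]; simp
    simp only [h2, map_one] at h1
    rw [Fintype.sum_unique, Fintype.sum_unique, Matrix.one_apply_eq] at h1
    exact_mod_cast h1.symm
  rw [htr]
  have hpos : 0 < ∑ i, r i := by
    have := Finset.single_le_sum (f := r) (fun i _ => hr0 i) (Finset.mem_univ z)
    linarith
  exact_mod_cast hpos.ne'

theorem S_bij_data {H : Type*} [Ring H] [HopfAlgebra ℂ H] [FiniteDimensional ℂ H] [IsSemisimpleRing H] :
    Function.Bijective (aS H) ∧ lam H 1 ≠ 0 := by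
  obtain ⟨n, d, hd, ⟨e⟩⟩ := IsSemisimpleRing.exists_algEquiv_pi_matrix_of_isAlgClosed ℂ H
  obtain ⟨z, hz1, hz⟩ := char_eq e (Bialgebra.counitAlgHom ℂ H)
  have hz' : counit (R := ℂ) (A := H) = ch e z := hz
  obtain ⟨s, hsz, hss, hchs, hτ⟩ := dual_data e z hz1 hz'
  have hchS : ∀ i x, ch e i (aS H x) = ch e (s i) x := fun i x => by rw [← hchs]; rfl
  have hinj : Function.Injective (aS H) := by
    rw [injective_iff_map_eq_zero]
    intro h hh
    apply mc_ext e
    intro i a b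
    have hk : ∀ y, ch e i (h * y) = 0 := by
      intro y
      rw [← hss i, ← hchS, antipode_mul_antidistrib, hh, mul_zero, map_zero]
    rw [mc_of_ch, map_zero, hk]
  have hbij : Function.Bijective (aS H) := ⟨hinj, (LinearMap.injective_iff_surjective).mp hinj⟩
  have hL : ∀ x : H, x * E0 e z = counit (R := ℂ) x • E0 e z := by
    intro x; rw [hz']; exact E0_mul e z hz1 x
  have hL' : ∀ x : H, E0 e z * x = counit (R := ℂ) x • E0 e z := by
    intro x; rw [hz']; exact E0_mul_left e z hz1 x
  have hL1 : counit (R := ℂ) (E0 e z) = 1 := by rw [hz', ch_E0]; simp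
  obtain ⟨m, hm, hS⟩ := S2_finite (E0 e z) hL hL' hL1 hbij
  refine ⟨hbij, ?_⟩
  rw [lam_one]
  exact trace_pos e (S2 H) S2_mul S2_one (fun i x => by rw [S2_apply, hchS, hchS, hss]) m hm hS z hz1
end
end SSHopf

namespace SSHopf
section
open TensorProduct Coalgebra WithConv HopfAlgebra

section
variable {V W : Type*} [AddCommGroup V] [Module ℂ V] [AddCommGroup W] [Module ℂ W]

/-- product functional -/
noncomputable def pq (f : V →ₗ[ℂ] ℂ) (g : W →ₗ[ℂ] ℂ) : V ⊗[ℂ] W →ₗ[ℂ] ℂ :=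
  LinearMap.mul' ℂ ℂ ∘ₗ TensorProduct.map f g

@[simp] theorem pq_tmul (f : V →ₗ[ℂ] ℂ) (g : W →ₗ[ℂ] ℂ) (x : V) (y : W) :
    pq f g (x ⊗ₜ y) = f x * g y := rfl

theorem sepq [FiniteDimensional ℂ V] [FiniteDimensional ℂ W] {x y : V ⊗[ℂ] W}
    (h : ∀ f g, pq f g x = pq f g y) : x = y := by
  set b := Module.finBasis ℂ V
  set c := Module.finBasis ℂ W
  apply (b.tensorProduct c).repr.injective
  ext ⟨i, j⟩
  have h1 : ∀ t : V ⊗[ℂ] W, (b.tensorProduct c).repr t (i, j) = pq (b.coord i) (c.coord j) t := by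
    intro t
    induction t with
    | zero => simp
    | add a b ha hb => simp only [map_add, Finsupp.add_apply, ha, hb]
    | tmul a c => simp [Module.Basis.tensorProduct_repr_tmul_apply, mul_comm]
  rw [h1, h1, h]

theorem sepq3 [FiniteDimensional ℂ V] {x y : V ⊗[ℂ] (V ⊗[ℂ] V)}
    (h : ∀ f g k, pq f (pq g k) x = pq f (pq g k) y) : x = y := by
  apply sepq
  intro f G
  let F : V ⊗[ℂ] (V ⊗[ℂ] V) →ₗ[ℂ] V ⊗[ℂ] V :=
    (TensorProduct.lid ℂ _).toLinearMap ∘ₗ TensorProduct.map f LinearMap.id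
  have h1 : ∀ (G : V ⊗[ℂ] V →ₗ[ℂ] ℂ) t, pq f G t = G (F t) := by
    intro G t
    induction t with
    | zero => simp
    | add a b ha hb => simp only [map_add, ha, hb]
    | tmul a c => simp [F]
  have h2 : F x = F y := by
    apply sepq
    intro g k
    rw [← h1, ← h1, h]
  rw [h1, h1, h2]
end

/-- the dual algebra -/
def DH (H : Type*) [Ring H] [HopfAlgebra ℂ H] := WithConv (H →ₗ[ℂ] ℂ)

noncomputable instance dRing (H : Type*) [Ring H] [HopfAlgebra ℂ H] : Ring (DH H) :=
  inferInstanceAs (Ring (WithConv (H →ₗ[ℂ] ℂ)))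
noncomputable instance dAlg (H : Type*) [Ring H] [HopfAlgebra ℂ H] : Algebra ℂ (DH H) :=
  inferInstanceAs (Algebra ℂ (WithConv (H →ₗ[ℂ] ℂ)))

/-- underlying functional -/
noncomputable def dE (H : Type*) [Ring H] [HopfAlgebra ℂ H] : DH H ≃ₗ[ℂ] (H →ₗ[ℂ] ℂ) where
  toFun f := WithConv.ofConv f
  invFun f := WithConv.toConv f
  map_add' _ _ := rfl
  map_smul' _ _ := rfl
  left_inv _ := rfl
  right_inv _ := rfl

variable {H : Type*} [Ring H] [HopfAlgebra ℂ H] [FiniteDimensional ℂ H]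

instance : FiniteDimensional ℂ (DH H) :=
  FiniteDimensional.of_injective (dE H).toLinearMap
    (dE H).injective

theorem finrank_DH : Module.finrank ℂ (DH H) = Module.finrank ℂ H := by
  rw [(dE H).finrank_eq]
  exact Subspace.dual_finrank_eq

/-- evaluation -/
noncomputable def ev (x : H) : DH H →ₗ[ℂ] ℂ where
  toFun f := dE H f x
  map_add' _ _ := by simp
  map_smul' _ _ := by simp

theorem ev_apply (x : H) (f : DH H) : ev x f = dE H f x := rfl

theorem ev_surj (φ : DH H →ₗ[ℂ] ℂ) : ∃ x : H, φ = ev x := by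
  obtain ⟨x, hx⟩ := (Module.evalEquiv ℂ H).surjective (φ ∘ₗ (dE H).symm.toLinearMap)
  refine ⟨x, ?_⟩
  ext f
  have := congrArg (fun F => F (dE H f)) hx
  simpa [ev_apply] using this.symm

theorem ev_add (x y : H) (f : DH H) : ev (x + y) f = ev x f + ev y f := by simp [ev_apply]

theorem dsep {f g : DH H} (h : ∀ x, ev x f = ev x g) : f = g := by
  apply (dE H).injective
  ext x
  exact h x

theorem dsep2 {s t : DH H ⊗[ℂ] DH H} (h : ∀ x y : H, pq (ev x) (ev y) s = pq (ev x) (ev y) t) : s = t := by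
  apply sepq
  intro f g
  obtain ⟨x, rfl⟩ := ev_surj f
  obtain ⟨y, rfl⟩ := ev_surj g
  exact h x y

theorem dsep3 {s t : DH H ⊗[ℂ] (DH H ⊗[ℂ] DH H)}
    (h : ∀ x y w : H, pq (ev x) (pq (ev y) (ev w)) s = pq (ev x) (pq (ev y) (ev w)) t) : s = t := by
  apply sepq3
  intro f g k
  obtain ⟨x, rfl⟩ := ev_surj f
  obtain ⟨y, rfl⟩ := ev_surj g
  obtain ⟨w, rfl⟩ := ev_surj k
  exact h x y w

theorem ev_mul (x : H) (f g : DH H) :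
    ev x (f * g) = ∑ i ∈ (ℛ ℂ x).index, ev ((ℛ ℂ x).left i) f * ev ((ℛ ℂ x).right i) g :=
  Coalgebra.Repr.convMul_apply (ℛ ℂ x) f g

theorem ev_one (x : H) : ev x (1 : DH H) = counit (R := ℂ) x := rfl

/-- comultiplication of the dual -/
noncomputable def dcomul (H : Type*) [Ring H] [HopfAlgebra ℂ H] [FiniteDimensional ℂ H] :
    DH H →ₗ[ℂ] DH H ⊗[ℂ] DH H :=
  (TensorProduct.congr (dE H) (dE H)).symm.toLinearMap ∘ₗ
  (TensorProduct.dualDistribEquiv ℂ H H).symm.toLinearMap ∘ₗ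
  LinearMap.lcomp ℂ ℂ (LinearMap.mul' ℂ H) ∘ₗ (dE H).toLinearMap

theorem dcomul_ev (f : DH H) (x y : H) : pq (ev x) (ev y) (dcomul H f) = ev (x * y) f := by
  have h1 : ∀ t : DH H ⊗[ℂ] DH H, pq (ev x) (ev y) t =
      TensorProduct.dualDistribEquiv ℂ H H
        (TensorProduct.congr (dE H) (dE H) t) (x ⊗ₜ y) := by
    intro t
    induction t with
    | zero => simp
    | add a b ha hb => simp only [map_add, LinearMap.add_apply, ha, hb]
    | tmul a b => rfl
  rw [h1]
  simp only [dcomul, LinearMap.comp_apply, LinearEquiv.coe_coe, LinearEquiv.apply_symm_apply]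
  rfl

/-- counit of the dual -/
noncomputable def dcounit (H : Type*) [Ring H] [HopfAlgebra ℂ H] [FiniteDimensional ℂ H] :
    DH H →ₗ[ℂ] ℂ := ev 1

/-- antipode of the dual -/
noncomputable def dS (H : Type*) [Ring H] [HopfAlgebra ℂ H] [FiniteDimensional ℂ H] :
    DH H →ₗ[ℂ] DH H :=
  (dE H).symm.toLinearMap ∘ₗ
    LinearMap.lcomp ℂ ℂ (aS H) ∘ₗ (dE H).toLinearMap

theorem dS_ev (f : DH H) (x : H) : ev x (dS H f) = ev (aS H x) f := rfl

noncomputable instance dCoalg : Coalgebra ℂ (DH H) where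
  comul := dcomul H
  counit := dcounit H
  coassoc := by
    ext f : 1
    apply dsep3
    intro x y w
    have h1 : ∀ t : DH H ⊗[ℂ] DH H, pq (ev x) (pq (ev y) (ev w))
        (TensorProduct.assoc ℂ (DH H) (DH H) (DH H) ((dcomul H).rTensor (DH H) t)) =
        pq (ev (x * y)) (ev w) t := by
      intro t
      induction t with
      | zero => simp
      | add a b ha hb => simp only [map_add, ha, hb]
      | tmul a b =>
        rw [LinearMap.rTensor_tmul, pq_tmul, ← dcomul_ev]
        generalize dcomul H a = T
        induction T with
        | zero => simp
        | add a b ha hb => simp only [map_add, add_tmul, ha, hb, add_mul]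
        | tmul a c => simp [mul_assoc]
    have h2 : ∀ t : DH H ⊗[ℂ] DH H, pq (ev x) (pq (ev y) (ev w))
        ((dcomul H).lTensor (DH H) t) = pq (ev x) (ev (y * w)) t := by
      intro t
      induction t with
      | zero => simp
      | add a b ha hb => simp only [map_add, ha, hb]
      | tmul a b => rw [LinearMap.lTensor_tmul, pq_tmul, dcomul_ev, pq_tmul]
    simp only [LinearMap.comp_apply, LinearEquiv.coe_coe]
    rw [h1, h2, dcomul_ev, dcomul_ev, mul_assoc]
  rTensor_counit_comp_comul := by
    ext f : 1
    apply (TensorProduct.lid ℂ (DH H)).injective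
    apply dsep
    intro x
    have h1 : ∀ t : DH H ⊗[ℂ] DH H, ev x (TensorProduct.lid ℂ (DH H) ((dcounit H).rTensor (DH H) t)) =
        pq (ev 1) (ev x) t := by
      intro t
      induction t with
      | zero => simp
      | add a b ha hb => simp only [map_add, ha, hb]
      | tmul a b => simp [dcounit]
    rw [LinearMap.comp_apply, h1, dcomul_ev]
    simp
  lTensor_counit_comp_comul := by
    ext f : 1
    apply (TensorProduct.rid ℂ (DH H)).injective
    apply dsep
    intro x
    have h1 : ∀ t : DH H ⊗[ℂ] DH H, ev x (TensorProduct.rid ℂ (DH H) ((dcounit H).lTensor (DH H) t)) =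
        pq (ev x) (ev 1) t := by
      intro t
      induction t with
      | zero => simp
      | add a b ha hb => simp only [map_add, ha, hb]
      | tmul a b => simp [dcounit, mul_comm]
    rw [LinearMap.comp_apply, h1, dcomul_ev]
    simp

theorem pq_mul (x y : H) (s t : DH H ⊗[ℂ] DH H) : pq (ev x) (ev y) (s * t) =
    ∑ i ∈ (ℛ ℂ x).index, ∑ j ∈ (ℛ ℂ y).index,
      pq (ev ((ℛ ℂ x).left i)) (ev ((ℛ ℂ y).left j)) s *
      pq (ev ((ℛ ℂ x).right i)) (ev ((ℛ ℂ y).right j)) t := by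
  induction s with
  | zero => simp
  | add a b ha hb => simp only [map_add, add_mul, ha, hb, Finset.sum_add_distrib]
  | tmul a b =>
    induction t with
    | zero => simp
    | add a b ha hb => simp only [map_add, mul_add, ha, hb, Finset.sum_add_distrib]
    | tmul c d =>
      rw [Algebra.TensorProduct.tmul_mul_tmul, pq_tmul, ev_mul, ev_mul, Finset.sum_mul_sum]
      simp only [pq_tmul]
      apply Finset.sum_congr rfl; intro i _
      apply Finset.sum_congr rfl; intro j _
      ring

noncomputable instance dBialg : Bialgebra ℂ (DH H) :=
  Bialgebra.mk' ℂ (DH H) (by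
    change ev (1 : H) (1 : DH H) = 1
    rw [ev_one]; simp)
  (by
    intro a b
    change ev (1 : H) (a * b) = ev 1 a * ev 1 b
    have h1 : ev (1 : H) (a * b) = pr (dE H a) (dE H b) (comul (R := ℂ) 1) := rfl
    rw [h1, Bialgebra.comul_one, Algebra.TensorProduct.one_def]
    rfl)
  (by
    change dcomul H 1 = 1
    apply dsep2
    intro x y
    rw [dcomul_ev, Algebra.TensorProduct.one_def, pq_tmul, ev_one, ev_one, ev_one]
    simp)
  (by
    intro a b
    change dcomul H (a * b) = dcomul H a * dcomul H b
    apply dsep2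
    intro x y
    rw [dcomul_ev, pq_mul]
    simp only [dcomul_ev]
    have h1 : ev (x * y) (a * b) = pr (dE H a) (dE H b) (comul (R := ℂ) (x * y)) := rfl
    rw [h1, Bialgebra.comul_mul]
    conv_lhs => rw [← (ℛ ℂ x).eq, ← (ℛ ℂ y).eq]
    rw [Finset.sum_mul_sum]
    simp only [map_sum, Algebra.TensorProduct.tmul_mul_tmul, pr_tmul, ev_apply])

theorem ev_sum_left {ι : Type*} (s : Finset ι) (x : ι → H) (f : DH H) :
    ∑ i ∈ s, ev (x i) f = ev (∑ i ∈ s, x i) f := by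
  simp [ev_apply]

noncomputable instance dHopf : HopfAlgebra ℂ (DH H) where
  antipode := dS H
  mul_antipode_rTensor_comul := by
    ext f : 1
    apply dsep
    intro x
    have h1 : ∀ t : DH H ⊗[ℂ] DH H, ev x (LinearMap.mul' ℂ (DH H) ((dS H).rTensor (DH H) t)) =
        ∑ i ∈ (ℛ ℂ x).index, pq (ev (aS H ((ℛ ℂ x).left i))) (ev ((ℛ ℂ x).right i)) t := by
      intro t
      induction t with
      | zero => simp
      | add a b ha hb => simp only [map_add, ha, hb, Finset.sum_add_distrib]
      | tmul a b => simp [ev_mul, dS_ev]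
    change ev x (LinearMap.mul' ℂ (DH H) ((dS H).rTensor (DH H) (dcomul H f))) = _
    rw [h1]
    simp only [dcomul_ev]
    rw [ev_sum_left, sum_antipode_mul_eq_algebraMap_counit]
    change ev _ f = ev x (algebraMap ℂ (DH H) (ev 1 f))
    simp only [Algebra.algebraMap_eq_smul_one, map_smul, ev_one]
    simp [ev_apply, mul_comm]
  mul_antipode_lTensor_comul := by
    ext f : 1
    apply dsep
    intro x
    have h1 : ∀ t : DH H ⊗[ℂ] DH H, ev x (LinearMap.mul' ℂ (DH H) ((dS H).lTensor (DH H) t)) =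
        ∑ i ∈ (ℛ ℂ x).index, pq (ev ((ℛ ℂ x).left i)) (ev (aS H ((ℛ ℂ x).right i))) t := by
      intro t
      induction t with
      | zero => simp
      | add a b ha hb => simp only [map_add, ha, hb, Finset.sum_add_distrib]
      | tmul a b => simp [ev_mul, dS_ev]
    change ev x (LinearMap.mul' ℂ (DH H) ((dS H).lTensor (DH H) (dcomul H f))) = _
    rw [h1]
    simp only [dcomul_ev]
    rw [ev_sum_left, sum_mul_antipode_eq_algebraMap_counit]
    change ev _ f = ev x (algebraMap ℂ (DH H) (ev 1 f))
    simp only [Algebra.algebraMap_eq_smul_one, map_smul, ev_one]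
    simp [ev_apply, mul_comm]
end
end SSHopf

namespace SSHopf
section
open TensorProduct Coalgebra WithConv HopfAlgebra

theorem maschke {K : Type*} [Ring K] [HopfAlgebra ℂ K] (L : K)
    (hL : ∀ x : K, x * L = counit (R := ℂ) x • L) (hL1 : counit (R := ℂ) L = 1) :
    IsSemisimpleRing K := by
  have ht := casimir L hL
  have hm : LinearMap.mul' ℂ K (TensorProduct.map LinearMap.id (aS K) (comul (R := ℂ) L)) = 1 := by
    have := mul_antipode_lTensor_comul_apply (R := ℂ) L
    rw [hL1, map_one] at this
    exact this
  generalize TensorProduct.map LinearMap.id (aS K) (comul (R := ℂ) L) = T at ht hm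
  refine (isSemisimpleModule_iff K K).mpr ⟨fun N => ?_⟩
  obtain ⟨π, hπ⟩ := Submodule.exists_isCompl (N.restrictScalars ℂ)
  let q : K →ₗ[ℂ] K := (N.restrictScalars ℂ).subtype ∘ₗ Submodule.linearProjOfIsCompl _ _ hπ
  have hqN : ∀ x, q x ∈ N := fun x => (Submodule.linearProjOfIsCompl _ _ hπ x).2
  have hqid : ∀ x ∈ N, q x = x := by
    intro x hx
    have := Submodule.linearProjOfIsCompl_apply_left hπ ⟨x, hx⟩
    exact congrArg Subtype.val this
  let p : K → K := fun m => LinearMap.mul' ℂ K (TensorProduct.map LinearMap.id (q ∘ₗ LinearMap.mulRight ℂ m) T)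
  have hpN : ∀ m, p m ∈ N := by
    intro m
    simp only [p]
    clear ht hm
    induction T with
    | zero => simp
    | add a b ha hb => simp only [map_add]; exact N.add_mem ha hb
    | tmul a b => exact N.smul_mem a (hqN _)
  have hpid : ∀ m ∈ N, p m = m := by
    intro m hmN
    have h1 : ∀ T : K ⊗[ℂ] K, LinearMap.mul' ℂ K (TensorProduct.map LinearMap.id (q ∘ₗ LinearMap.mulRight ℂ m) T) =
        LinearMap.mul' ℂ K T * m := by
      intro T
      induction T with
      | zero => simp
      | add a b ha hb => simp only [map_add, add_mul, ha, hb]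
      | tmul a b =>
        have : q (b * m) = b * m := hqid _ (N.smul_mem b hmN)
        simp [this, mul_assoc]
    simp only [p]
    rw [h1, hm, one_mul]
  have hpadd : ∀ m m', p (m + m') = p m + p m' := by
    intro m m'
    simp only [p]
    clear ht hm hpN hpid p
    induction T with
    | zero => simp
    | add a b ha hb => simp only [map_add, ha, hb]; abel
    | tmul a b => simp [mul_add]
  have hpsmul : ∀ h m, p (h * m) = h * p m := by
    intro h m
    have h1 : ∀ T : K ⊗[ℂ] K, LinearMap.mul' ℂ K (TensorProduct.map LinearMap.id (q ∘ₗ LinearMap.mulRight ℂ (h * m)) T) =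
        LinearMap.mul' ℂ K (TensorProduct.map LinearMap.id (q ∘ₗ LinearMap.mulRight ℂ m) (T * (1 ⊗ₜ h))) := by
      intro T
      induction T with
      | zero => simp
      | add a b ha hb => simp only [map_add, add_mul, ha, hb]
      | tmul a b => simp [mul_assoc]
    have h2 : ∀ T : K ⊗[ℂ] K,
        LinearMap.mul' ℂ K (TensorProduct.map LinearMap.id (q ∘ₗ LinearMap.mulRight ℂ m) ((h ⊗ₜ 1) * T)) =
        h * LinearMap.mul' ℂ K (TensorProduct.map LinearMap.id (q ∘ₗ LinearMap.mulRight ℂ m) T) := by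
      intro T
      induction T with
      | zero => simp
      | add a b ha hb => simp only [map_add, mul_add, ha, hb]
      | tmul a b => simp [mul_assoc]
    simp only [p]
    rw [h1, ← ht, h2]
  let P : K →ₗ[K] N :=
    { toFun := fun m => ⟨p m, hpN m⟩
      map_add' := fun m m' => Subtype.ext (hpadd m m')
      map_smul' := fun h m => Subtype.ext (hpsmul h m) }
  exact ⟨LinearMap.ker P, LinearMap.isCompl_of_proj (f := P) (fun x => Subtype.ext (hpid x.1 x.2))⟩

theorem dual_semisimple {H : Type*} [Ring H] [HopfAlgebra ℂ H] [FiniteDimensional ℂ H] [IsSemisimpleRing H] :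
    IsSemisimpleRing (DH H) := by
  obtain ⟨hS, hl⟩ := S_bij_data (H := H)
  have h1 : ∀ f : H →ₗ[ℂ] ℂ, cv f (lam H ∘ₗ aS H) = f 1 • (lam H ∘ₗ aS H) := by
    intro f
    let Se : H ≃ₗ[ℂ] H := LinearEquiv.ofBijective (aS H) hS
    have hSe : f = (f ∘ₗ Se.symm.toLinearMap) ∘ₗ aS H := by
      ext x
      have : Se.symm (Se x) = x := Se.symm_apply_apply x
      simp only [LinearMap.comp_apply]
      exact congrArg f this.symm
    have h2 : (f ∘ₗ Se.symm.toLinearMap) 1 = f 1 := by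
      conv_rhs => rw [hSe]
      simp
    conv_lhs => rw [hSe]
    rw [← cv_S, lam_int, h2]; rfl
  let L : DH H := (dE H).symm ((lam H 1)⁻¹ • (lam H ∘ₗ aS H))
  apply maschke L
  · intro x
    apply (dE H).injective
    change cv (dE H x) ((lam H 1)⁻¹ • (lam H ∘ₗ aS H)) = (dE H x 1) • ((lam H 1)⁻¹ • (lam H ∘ₗ aS H))
    rw [cv_smul_right, h1, smul_comm]
  · change ((lam H 1)⁻¹ • (lam H ∘ₗ aS H)) 1 = 1
    simp [hl]

theorem part_two {H : Type*} [Ring H] [HopfAlgebra ℂ H] [FiniteDimensional ℂ H] [IsSemisimpleRing H]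
    (h1 : 1 < Module.finrank ℂ H) (h60 : Module.finrank ℂ H < 60) :
    ∃ g : H, g ≠ 1 ∧ comul (R := ℂ) g = g ⊗ₜ[ℂ] g ∧ counit (R := ℂ) g = 1 := by
  have := dual_semisimple (H := H)
  obtain ⟨φ, hφ⟩ := part_one (K := DH H) (by rw [finrank_DH]; exact h1) (by rw [finrank_DH]; exact h60)
  obtain ⟨g, hg⟩ := ev_surj φ.toLinearMap
  have hg' : ∀ f, φ f = ev g f := fun f => congrArg (fun F => F f) hg
  refine ⟨g, ?_, ?_, ?_⟩
  · rintro rfl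
    apply hφ
    ext f
    exact hg' f
  · apply sep2
    intro f k
    have h2 := map_mul φ ((dE H).symm f) ((dE H).symm k)
    rw [hg', hg', hg'] at h2
    exact h2
  · have h2 := map_one φ
    rw [hg'] at h2
    exact h2
end
end SSHopf


open TensorProduct in
/-- A semisimple Hopf algebra over ℂ whose dimension `n` satisfies `1 < n < 60`
contains a nontrivial group-like element and admits a nontrivial one-dimensional
representation. -/
theorem semisimple_hopf_dim_lt_sixty_grouplike_and_char
    (H : Type*) [Ring H] [HopfAlgebra ℂ H]
    [FiniteDimensional ℂ H] [IsSemisimpleRing H]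
    (h1 : 1 < Module.finrank ℂ H) (h60 : Module.finrank ℂ H < 60) :
    (∃ g : H, g ≠ 1 ∧ Coalgebra.comul (R := ℂ) g = g ⊗ₜ[ℂ] g ∧
      Coalgebra.counit (R := ℂ) g = 1) ∧
    (∃ φ : H →ₐ[ℂ] ℂ, φ ≠ Bialgebra.counitAlgHom ℂ H) := by
  exact ⟨SSHopf.part_two h1 h60, SSHopf.part_one h1 h60⟩
end

section
/- Let λ and μ be roots of unity in ℂ such that (λ − μ)/4 is an algebraic integer. Then λ = μ. -/
/-- If `λ` and `μ` are roots of unity in ℂ and `(λ - μ) / 4` is an algebraic integer,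
then `λ = μ`. -/
theorem roots_of_unity_diff_div_four_integral_eq
    (l m : ℂ) (hl : ∃ k : ℕ, 0 < k ∧ l ^ k = 1) (hm : ∃ k : ℕ, 0 < k ∧ m ^ k = 1)
    (hint : IsIntegral ℤ ((l - m) / 4)) :
    l = m := by
  obtain ⟨k, hk, hlk⟩ := hl
  obtain ⟨j, hj, hmj⟩ := hm
  have hfin : FiniteDimensional ℚ (IntermediateField.adjoin ℚ ({l, m} : Set ℂ)) := by
    apply IntermediateField.finiteDimensional_adjoin
    intro x hx
    rcases hx with rfl | hx
    · exact IsIntegral.of_pow hk (by rw [hlk]; exact isIntegral_one)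
    · rw [Set.mem_singleton_iff] at hx
      subst hx
      exact IsIntegral.of_pow hj (by rw [hmj]; exact isIntegral_one)
  let K := IntermediateField.adjoin ℚ ({l, m} : Set ℂ)
  have : NumberField K := { to_charZero := inferInstance, to_finiteDimensional := hfin }
  let a : K := ⟨l, IntermediateField.subset_adjoin _ _ (by simp)⟩
  let b : K := ⟨m, IntermediateField.subset_adjoin _ _ (by simp)⟩
  have ha : a ^ k = 1 := Subtype.ext hlk
  have hb : b ^ j = 1 := Subtype.ext hmj
  have hval : (algebraMap K ℂ) ((a - b) / 4) = (l - m) / 4 := by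
    rw [map_div₀, map_sub, map_ofNat]; rfl
  have hxi : IsIntegral ℤ ((a - b) / 4) := by
    rw [← isIntegral_algebraMap_iff (B := ℂ) (algebraMap K ℂ).injective, hval]
    exact hint
  have hbound : ∀ φ : K →+* ℂ, ‖φ ((a - b) / 4)‖ ≤ 1 / 2 := by
    intro φ
    have h1 : ‖φ a‖ = 1 := Complex.norm_eq_one_of_pow_eq_one (by rw [← map_pow, ha, map_one]) hk.ne'
    have h2 : ‖φ b‖ = 1 := Complex.norm_eq_one_of_pow_eq_one (by rw [← map_pow, hb, map_one]) hj.ne'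
    have h3 := norm_sub_le (φ a) (φ b)
    rw [map_div₀, map_sub, map_ofNat, norm_div]
    norm_num
    linarith
  by_contra hne
  have hx0 : (a - b) / 4 ≠ 0 := by
    intro h
    rw [h, map_zero] at hval
    apply hne
    linear_combination -4 * hval
  obtain ⟨n, hn, hxn⟩ := NumberField.Embeddings.pow_eq_one_of_norm_le_one K ℂ hx0 hxi
    (fun φ => (hbound φ).trans (by norm_num))
  have h4 : ‖(algebraMap K ℂ) ((a - b) / 4)‖ = 1 :=
    Complex.norm_eq_one_of_pow_eq_one (by rw [← map_pow, hxn, map_one]) hn.ne'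
  have h5 := hbound (algebraMap K ℂ)
  rw [h4] at h5
  norm_num at h5
end

section
/- Let G be a finite group whose order is squarefree. Then every 2-cocycle on G with values in ℂˣ is a coboundary: if β : G × G → ℂˣ satisfies β(g, h) · β(gh, k) = β(g, hk) · β(h, k) for all g, h, k ∈ G, then there exists a function φ : G → ℂˣ such that β(g, h) = φ(g) · φ(h) · φ(gh)⁻¹ for all g, h ∈ G. In other words, the Schur multiplier H²(G, ℂˣ) of a group of squarefree order is trivial. -/
theorem cyc_aux {G : Type*} [Group G] [Fintype G]
    (β : G → G → ℂˣ)
    (hc : ∀ g h k : G, β g h * β (g * h) k = β g (h * k) * β h k) (g : G) :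
    ∃ ψ : G → ℂˣ, ∀ x ∈ Subgroup.zpowers g, ∀ y ∈ Subgroup.zpowers g,
      β x y * ψ (x * y) = ψ x * ψ y := by
  classical
  have h1 : ∀ x, β x 1 = β 1 1 := by
    intro x
    have := hc x 1 1
    simpa using this
  set n := orderOf g with hn
  have hn0 : 0 < n := orderOf_pos g
  let c : ℕ → ℂˣ := fun k => ∏ i ∈ Finset.range k, β (g ^ i) g
  have cs : ∀ k, c (k + 1) = c k * β (g ^ k) g := fun k => Finset.prod_range_succ _ _
  have hcc : ∀ i j, c i * c j * β (g ^ i) (g ^ j) = c (i + j) * β 1 1 := by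
    intro i j
    induction j with
    | zero => simp [c, h1]
    | succ j ih =>
      have h := hc (g ^ i) (g ^ j) g
      rw [← pow_add, ← pow_succ] at h
      rw [cs, ← add_assoc, cs]
      calc c i * (c j * β (g ^ j) g) * β (g ^ i) (g ^ (j + 1))
          = c i * c j * (β (g ^ i) (g ^ (j + 1)) * β (g ^ j) g) := by
            simp only [mul_assoc, mul_comm, mul_left_comm]
        _ = (c i * c j * β (g ^ i) (g ^ j)) * β (g ^ (i + j)) g := by
            rw [← h]; simp only [mul_assoc]
        _ = _ := by rw [ih]; simp only [mul_assoc, mul_comm, mul_left_comm]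
  obtain ⟨l, hl⟩ : ∃ l : ℂˣ, l ^ n = c n := by
    obtain ⟨z, hz⟩ := IsAlgClosed.exists_pow_nat_eq ((c n : ℂˣ) : ℂ) hn0
    have hz0 : z ≠ 0 := by
      rintro rfl
      rw [zero_pow hn0.ne'] at hz
      exact (c n).ne_zero hz.symm
    exact ⟨Units.mk0 z hz0, by ext; simpa using hz⟩
  let F : ℕ → ℂˣ := fun i => β 1 1 * l ^ i * (c i)⁻¹
  have hper : Function.Periodic F n := by
    intro i
    have h := hcc i n
    rw [pow_orderOf_eq_one, h1] at h
    have h' : c i * c n = c (i + n) := mul_right_cancel h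
    simp only [F, ← h', pow_add, hl]
    rw [mul_inv, mul_comm (c i)⁻¹, ← mul_assoc (β 1 1), mul_assoc (β 1 1 * l ^ i),
      mul_inv_cancel_left]
  have hF : ∀ i j, g ^ i = g ^ j → F i = F j := by
    intro i j h
    have := pow_inj_mod.1 h
    rw [← hper.map_mod_nat i, ← hper.map_mod_nat j, this]
  let ψ : G → ℂˣ := fun x => if h : ∃ i : ℕ, g ^ i = x then F h.choose else 1
  have hψ : ∀ i : ℕ, ψ (g ^ i) = F i := by
    intro i
    have h : ∃ j : ℕ, g ^ j = g ^ i := ⟨i, rfl⟩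
    simp only [ψ, dif_pos h]
    exact hF _ _ h.choose_spec
  refine ⟨ψ, ?_⟩
  intro x hx y hy
  rw [← mem_powers_iff_mem_zpowers] at hx hy
  obtain ⟨i, rfl⟩ := hx
  obtain ⟨j, rfl⟩ := hy
  simp only
  rw [← pow_add, hψ, hψ, hψ]
  have h := hcc i j
  have h' : β (g ^ i) (g ^ j) = c (i + j) * β 1 1 * (c i * c j)⁻¹ := by
    rw [eq_mul_inv_iff_mul_eq, mul_comm, h]
  rw [h']
  simp only [F]
  ext
  push_cast
  have a1 := (c (i+j)).ne_zero
  have a2 := (c i).ne_zero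
  have a3 := (c j).ne_zero
  field_simp
  try ring

theorem index_aux {G : Type*} [Group G] [Fintype G]
    (β : G → G → ℂˣ)
    (hc : ∀ g h k : G, β g h * β (g * h) k = β g (h * k) * β h k) (P : Subgroup G)
    (ψ : G → ℂˣ) (hψ : ∀ x ∈ P, ∀ y ∈ P, β x y * ψ (x * y) = ψ x * ψ y) :
    ∃ φ : G → ℂˣ, ∀ g h : G, β g h ^ P.index = φ g * φ h * (φ (g * h))⁻¹ := by
  classical
  let r : G → G := fun y => ((y : G ⧸ P)).out
  have hr : ∀ y, (r y)⁻¹ * y ∈ P := fun y => QuotientGroup.eq.1 (Quotient.out_eq' (y : G ⧸ P))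
  have hrq : ∀ y q, q ∈ P → r (y * q) = r y := by
    intro y q hq
    simp only [r]
    rw [QuotientGroup.mk_mul_of_mem y hq]
  let f : G → ℂˣ := fun y => β (r y) ((r y)⁻¹ * y) * (ψ ((r y)⁻¹ * y))⁻¹
  have hf : ∀ y q, q ∈ P → f (y * q) = f y * β y q * (ψ q)⁻¹ := by
    intro y q hq
    simp only [f, hrq y q hq]
    have e1 := hc (r y) ((r y)⁻¹ * y) q
    have e2 := hψ _ (hr y) q hq
    rw [mul_inv_cancel_left] at e1
    rw [← mul_assoc (r y)⁻¹]
    generalize (r y)⁻¹ * y = p at *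
    rw [← eq_mul_inv_iff_mul_eq] at e2
    rw [e2] at e1
    rw [← mul_inv_eq_iff_eq_mul] at e1
    rw [← e1]
    ext
    push_cast
    have a1 := (ψ p).ne_zero
    have a2 := (ψ q).ne_zero
    have a3 := (ψ (p * q)).ne_zero
    field_simp
  let a : G → G → ℂˣ := fun g y => β g y * f y * (f (g * y))⁻¹
  have ha : ∀ g y q, q ∈ P → a g (y * q) = a g y := by
    intro g y q hq
    simp only [a]
    rw [← mul_assoc g, hf _ _ hq, hf _ _ hq]
    have e := hc g y q
    rw [← mul_inv_eq_iff_eq_mul] at e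
    rw [← e]
    ext
    push_cast
    have a1 := (ψ q).ne_zero
    have a2 := (f (g * y)).ne_zero
    have a3 := (β y q).ne_zero
    have a4 := (β (g * y) q).ne_zero
    field_simp
  have hm : ∀ g h y, a g (h * y) * a h y = β g h * a (g * h) y := by
    intro g h y
    simp only [a]
    have e := hc g h y
    rw [← mul_inv_eq_iff_eq_mul] at e
    rw [← e, ← mul_assoc g]
    ext
    push_cast
    have a1 := (f (h * y)).ne_zero
    have a2 := (f (g * h * y)).ne_zero
    have a3 := (β h y).ne_zero
    field_simp
  let A : G → G ⧸ P → ℂˣ := fun g x => a g x.out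
  have hA : ∀ g (y : G), A g (y : G ⧸ P) = a g y := by
    intro g y
    have h := ha g (r y) _ (hr y)
    rw [mul_inv_cancel_left] at h
    exact h.symm
  have hAm : ∀ g h (x : G ⧸ P), A g (h • x) * A h x = β g h * A (g * h) x := by
    intro g h x
    obtain ⟨y, rfl⟩ := QuotientGroup.mk_surjective x
    have : h • (y : G ⧸ P) = ((h * y : G) : G ⧸ P) := rfl
    rw [this, hA, hA, hA, hm]
  clear_value A
  refine ⟨fun g => ∏ x, A g x, fun g h => ?_⟩
  rw [eq_mul_inv_iff_mul_eq]
  have e : ∏ x, A g x = ∏ x, A g (h • x) :=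
    (Equiv.prod_comp (MulAction.toPerm h : Equiv.Perm (G ⧸ P)) (A g)).symm
  beta_reduce
  rw [e, ← Finset.prod_mul_distrib, Finset.prod_congr rfl fun x _ => hAm g h x,
    Finset.prod_mul_distrib, Finset.prod_const, Finset.card_univ, ← Nat.card_eq_fintype_card]
  rfl

/-- The Schur multiplier of a finite group of squarefree order is trivial: every
2-cocycle on `G` with values in `ℂˣ` (trivial action) is a coboundary. -/
theorem squarefree_order_schur_multiplier_trivial
    (G : Type*) [Group G] [Fintype G] (hsf : Squarefree (Fintype.card G))
    (β : G → G → ℂˣ)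
    (hcocycle : ∀ g h k : G, β g h * β (g * h) k = β g (h * k) * β h k) :
    ∃ φ : G → ℂˣ, ∀ g h : G, β g h = φ g * φ h * (φ (g * h))⁻¹ := by
  let S : AddSubgroup ℤ :=
    { carrier := {n | ∃ φ : G → ℂˣ, ∀ g h : G, β g h ^ n = φ g * φ h * (φ (g * h))⁻¹}
      zero_mem' := ⟨fun _ => 1, by simp⟩
      add_mem' := by
        rintro m n ⟨φ, hφ⟩ ⟨χ, hχ⟩
        refine ⟨fun g => φ g * χ g, fun g h => ?_⟩
        rw [zpow_add, hφ, hχ, mul_inv]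
        simp only [mul_assoc, mul_comm, mul_left_comm]
      neg_mem' := by
        rintro m ⟨φ, hφ⟩
        refine ⟨fun g => (φ g)⁻¹, fun g h => ?_⟩
        rw [zpow_neg, hφ, mul_inv, mul_inv] }
  have hS : ∀ g : G, ((Subgroup.zpowers g).index : ℤ) ∈ S := by
    intro g
    obtain ⟨ψ, hψ⟩ := cyc_aux β hcocycle g
    obtain ⟨φ, hφ⟩ := index_aux β hcocycle _ ψ hψ
    exact ⟨φ, fun g h => by rw [zpow_natCast]; exact hφ g h⟩
  obtain ⟨d, hd⟩ := Int.subgroup_cyclic S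
  rw [← AddSubgroup.zmultiples_eq_closure] at hd
  have hdvd : ∀ g : G, d.natAbs ∣ (Subgroup.zpowers g).index := by
    intro g
    have := hS g
    rw [hd, Int.mem_zmultiples_iff] at this
    exact Int.natAbs_dvd_natAbs.2 this
  have h1 : d.natAbs = 1 := by
    by_contra hne
    obtain ⟨q, hq, hqd⟩ := Nat.exists_prime_and_dvd hne
    haveI := Fact.mk hq
    have hqc : q ∣ Fintype.card G := by
      have := hqd.trans (hdvd 1)
      rwa [Subgroup.zpowers_one_eq_bot, Subgroup.index_bot, Nat.card_eq_fintype_card] at this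
    obtain ⟨g, hg⟩ := exists_prime_orderOf_dvd_card q hqc
    obtain ⟨k, hk⟩ := hqd.trans (hdvd g)
    have hmul := (Subgroup.zpowers g).card_mul_index
    rw [Nat.card_zpowers, hg, hk, Nat.card_eq_fintype_card] at hmul
    exact hq.one_lt.ne' (Nat.isUnit_iff.1 (hsf q ⟨k, by rw [← hmul, mul_assoc]⟩))
  have hone : (1 : ℤ) ∈ S := by
    rw [hd, Int.mem_zmultiples_iff]
    exact Int.natAbs_dvd_natAbs.1 (by simp [h1])
  obtain ⟨φ, hφ⟩ := hone
  exact ⟨φ, fun g h => by simpa using hφ g h⟩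
end
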